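/- arXiv:1504.06246 — 2 statements merged into one kernel-verified Lean document; each statement's English description precedes it below -/
import Mathlib

section
/- (Proposition 1(i)) Let p∈(1,2) and let I⊆{1,…,d} be a nonempty subset, and suppose Assumptions (N1)-(N2) hold for the noise density q with constants A>0, λ_1,…,λ_d>0. Then there exists a constant C_{p,I} = C_{p,I}(|I|,K,q) > 0 such that for every h∈(0,1]^d, ‖L_{(h_I)}‖_p ≤ C_{p,I} · V_{h_I}^{-(1−1/p)} · ∏_{j∈I} h_j^{-λ_j}. -/
open MeasureTheory ENNReal Filter Finset
open scoped ENNReal Topology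

noncomputable section

namespace Deconv

/-- Euclidean inner product on a finite coordinate space. -/
def dotp {ι : Type} [Fintype ι] (t x : ι → ℝ) : ℝ := ∑ j, t j * x j

/-- Fourier transform `ĝ(t) = ∫ e^{i⟨t,x⟩} g(x) dx` of a real function. -/
def ftI {ι : Type} [Fintype ι] (g : (ι → ℝ) → ℝ) (t : ι → ℝ) : ℂ :=
  ∫ x : ι → ℝ, Complex.exp (Complex.I * (dotp t x : ℝ)) * (g x : ℂ)

/-- Glue coordinates indexed by `I` with coordinates indexed by `Iᶜ`. -/
def glue {d : ℕ} (I : Finset (Fin d)) (xI : I → ℝ) (y : ↥(Iᶜ) → ℝ) : Fin d → ℝ :=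
  fun i => if h : i ∈ I then xI ⟨i, h⟩ else y ⟨i, Finset.mem_compl.mpr h⟩

/-- Marginal density on the coordinates indexed by `I`. -/
def marginal {d : ℕ} (I : Finset (Fin d)) (g : (Fin d → ℝ) → ℝ) (xI : I → ℝ) : ℝ :=
  ∫ y : ↥(Iᶜ) → ℝ, g (glue I xI y)

/-- A probability density. -/
def IsDensity {ι : Type} [Fintype ι] (g : (ι → ℝ) → ℝ) : Prop :=
  (∀ x, 0 ≤ g x) ∧ (∫ x, g x) = 1

/-- Product kernel `K_I`. -/
def KI {d : ℕ} (I : Finset (Fin d)) (K : ℝ → ℝ) (xI : I → ℝ) : ℝ := ∏ j : I, K (xI j)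

/-- Rescaled product kernel `K_{h_I}`. -/
def Kh {d : ℕ} (I : Finset (Fin d)) (K : ℝ → ℝ) (h : Fin d → ℝ) (xI : I → ℝ) : ℝ :=
  (∏ j ∈ I, h j)⁻¹ * ∏ j : I, K (xI j / h ↑j)

/-- The deconvolution kernel `L_{(h_I)}`. -/
def Lh {d : ℕ} (I : Finset (Fin d)) (K : ℝ → ℝ) (q : (Fin d → ℝ) → ℝ) (h : Fin d → ℝ)
    (xI : I → ℝ) : ℂ :=
  (((2 * Real.pi) ^ (-(I.card : ℝ)) : ℝ) : ℂ) *
    ∫ t : I → ℝ, Complex.exp (-(Complex.I * (dotp t xI : ℝ))) *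
      (ftI (Kh I K h) t / ftI (marginal I q) t)

/-- Convolution of two densities on `ℝ^d`. -/
def conv {d : ℕ} (f g : (Fin d → ℝ) → ℝ) (x : Fin d → ℝ) : ℝ := ∫ y, f (x - y) * g y

/-- Law of the observation vector `Y^{(n)} = (Y_1,…,Y_n)`, `Y_k = X_k + ε_k`:
the `n`-fold product of the measure with density `f ⋆ q`. -/
def obsMeasure (d n : ℕ) (f q : (Fin d → ℝ) → ℝ) : Measure (Fin n → Fin d → ℝ) :=
  Measure.pi fun _ => volume.withDensity fun x => ENNReal.ofReal (conv f q x)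

/-- Kernel deconvolution estimator `f̃_{h_I}` built from the sample `y`. -/
def fHat {d : ℕ} (I : Finset (Fin d)) (K : ℝ → ℝ) (q : (Fin d → ℝ) → ℝ) (h : Fin d → ℝ)
    {n : ℕ} (y : Fin n → Fin d → ℝ) (xI : I → ℝ) : ℂ :=
  (n : ℂ)⁻¹ * ∑ k, Lh I K q h (fun j => xI j - y k ↑j)

/-- Expectation `E_f f̃_{h_I}(x_I)`. -/
def fHatMean {d : ℕ} (I : Finset (Fin d)) (K : ℝ → ℝ) (f q : (Fin d → ℝ) → ℝ)
    (h : Fin d → ℝ) (xI : I → ℝ) : ℂ :=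
  ∫ y : Fin d → ℝ, Lh I K q h (fun j => xI j - y ↑j)
    ∂(volume.withDensity fun x => ENNReal.ofReal (conv f q x))

/-- Stochastic error `ξ_{h_I} = f̃_{h_I} - E_f f̃_{h_I}`. -/
def xiProc {d : ℕ} (I : Finset (Fin d)) (K : ℝ → ℝ) (f q : (Fin d → ℝ) → ℝ) (h : Fin d → ℝ)
    {n : ℕ} (y : Fin n → Fin d → ℝ) (xI : I → ℝ) : ℂ :=
  fHat I K q h y xI - fHatMean I K f q h xI

/-- `λ_max = max_j λ_j`. -/
def lamMax {d : ℕ} (lam : Fin d → ℝ) : ℝ := sSup (Set.range lam)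

/-- `b_p = (1/2) ∧ (1 - 1/p)`  (with the convention `p.toReal = 0` for `p = ∞`). -/
def bp (p : ℝ≥0∞) : ℝ := min (1 / 2) (1 - 1 / p.toReal)

/-- The constant `c_p` of the bandwidth grid. -/
def cpGrid {d : ℕ} (lam : Fin d → ℝ) (p : ℝ≥0∞) : ℝ :=
  min 1 ((p.toReal / Real.exp 1 * (1 + lamMax lam * max 2 (p.toReal / (p.toReal - 1))))
    ^ (-(p.toReal * (bp p + lamMax lam))))

/-- Minimal bandwidth `h_min^{(p)}`. -/
def hminG (p : ℝ≥0∞) (n : ℕ) (m : ℕ) : ℝ :=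
  if p = ⊤ then (n : ℝ)⁻¹ else (n : ℝ) ^ (-(max 1 (p.toReal / m)))

/-- Maximal bandwidth `h_max^{(p)}`. -/
def hmaxG (p : ℝ≥0∞) (n : ℕ) (m : ℕ) : ℝ :=
  if p = ⊤ then 1 else (Real.log n) ^ (-(p.toReal / m))

/-- Membership in the dyadic bandwidth set `H_{p,I}` (only the coordinates in `I` matter). -/
def memGrid {d : ℕ} (lam : Fin d → ℝ) (p : ℝ≥0∞) (n : ℕ) (I : Finset (Fin d))
    (h : Fin d → ℝ) : Prop :=
  (∀ j ∈ I, ∃ k : ℕ, 1 ≤ k ∧ h j = 2 ^ (-(k : ℝ))) ∧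
  (∀ j ∈ I, hminG p n I.card ≤ h j ∧ h j ≤ hmaxG p n I.card) ∧
  ((if p = ⊤ then Real.sqrt (Real.log n) else cpGrid lam p) ≤
    ((n : ℝ) * ∏ j ∈ I, h j) ^ bp p * ∏ j ∈ I, h j ^ lam j)

/-- The majorant `U_p(h_I)`. -/
def Up {d : ℕ} (K : ℝ → ℝ) (q : (Fin d → ℝ) → ℝ) (lam : Fin d → ℝ) (p : ℝ≥0∞) (n : ℕ)
    (I : Finset (Fin d)) (h : Fin d → ℝ) : ℝ≥0∞ :=
  if p = ⊤ then
    ENNReal.ofReal ((n : ℝ) ^ (-(1 : ℝ) / 2) * Real.sqrt (Real.log n) *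
      ∏ j ∈ I, h j ^ (-lam j - 1 / 2))
  else if p = 2 then
    ENNReal.ofReal ((n : ℝ) ^ (-(1 : ℝ) / 2) * ∏ j ∈ I, h j ^ (-lam j - 1 / 2))
  else if p.toReal < 2 then
    ENNReal.ofReal ((n : ℝ) ^ (1 / p.toReal - 1)) * eLpNorm (Lh I K q h) p volume
  else
    ENNReal.ofReal ((n : ℝ) ^ (-(1 : ℝ) / 2)) *
      (ENNReal.ofReal (∏ j ∈ I, h j ^ (-lam j - 1 / 2)) +
        ENNReal.ofReal (Real.sqrt (Real.log n)) *
          eLpNorm (Lh I K q h) (ENNReal.ofReal (2 * p.toReal / (p.toReal + 2))) volume)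

/-- First-order partial derivative in direction `j` of a complex-valued function. -/
def cpd {ι : Type} [Fintype ι] [DecidableEq ι] (j : ι) (φ : (ι → ℝ) → ℂ) (t : ι → ℝ) : ℂ :=
  fderiv ℝ φ t (Pi.single j 1)

/-- Iterated mixed partial derivative `D^α φ`. -/
def multiPD {ι : Type} [Fintype ι] [DecidableEq ι] (α : ι → ℕ) (φ : (ι → ℝ) → ℂ) :
    (ι → ℝ) → ℂ :=
  (Finset.univ (α := ι)).toList.foldr (fun j ψ => (cpd j)^[α j] ψ) φ

/-- Assumption (N2), case `p = 2`: lower bound on `|q̂_I|`. -/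
def N2two {d : ℕ} (I : Finset (Fin d)) (q : (Fin d → ℝ) → ℝ) (A : ℝ) (lam : Fin d → ℝ) :
    Prop :=
  ∀ t : I → ℝ, A⁻¹ * ∏ j : I, (1 + t j ^ 2) ^ (-lam ↑j / 2) ≤ ‖ftI (marginal I q) t‖

/-- Assumption (N2), case `p ∈ (1,∞) \ {2}`. -/
def N2mid {d : ℕ} (I : Finset (Fin d)) (q : (Fin d → ℝ) → ℝ) (A : ℝ) (lam : Fin d → ℝ) :
    Prop :=
  (∀ t : I → ℝ, ftI (marginal I q) t ≠ 0) ∧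
  ContDiff ℝ I.card (fun t : I → ℝ => (ftI (marginal I q) t)⁻¹) ∧
  ∀ α : I → ℕ, (∑ j, α j) ≤ I.card → ∀ t : I → ℝ,
    ‖multiPD α (fun u => (ftI (marginal I q) u)⁻¹) t * ∏ j, (t j : ℂ) ^ α j‖ ≤
      A * ∏ j : I, (1 + t j ^ 2) ^ (lam ↑j / 2)

/-- Assumption (N2), case `p = ∞`. -/
def N2inf {d : ℕ} (I : Finset (Fin d)) (q : (Fin d → ℝ) → ℝ) (A : ℝ) (lam : Fin d → ℝ) :
    Prop :=
  (∀ t : I → ℝ, ftI (marginal I q) t ≠ 0) ∧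
  ContDiff ℝ 1 (fun t : I → ℝ => (ftI (marginal I q) t)⁻¹) ∧
  ∀ k : I, ∀ a : ℕ, a ≤ 1 → ∀ t : I → ℝ,
    ‖(cpd k)^[a] (fun u => (ftI (marginal I q) u)⁻¹) t‖ ≤
      A * ∏ j : I, (1 + t j ^ 2) ^ (lam ↑j / 2)

/-- Assumptions (N1)-(N2) of the paper, for a given `p` and a given block `I`. -/
def N1N2 {d : ℕ} (p : ℝ≥0∞) (I : Finset (Fin d)) (q : (Fin d → ℝ) → ℝ) (A : ℝ)
    (lam : Fin d → ℝ) : Prop :=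
  0 < A ∧ (∀ j, 0 < lam j) ∧
  (p = 2 → Integrable (ftI (marginal I q)) ∧ N2two I q A lam) ∧
  (2 < p → eLpNorm (marginal I q) ⊤ volume < ⊤) ∧
  (p ≠ 2 → p ≠ ⊤ → N2mid I q A lam) ∧
  (p = ⊤ → N2inf I q A lam)

/-- `K` is a symmetric Schwartz kernel integrating to one. -/
def IsKernel (K : ℝ → ℝ) : Prop :=
  (∃ KS : SchwartzMap ℝ ℝ, ⇑KS = K) ∧ (∀ z, K (-z) = K z) ∧ (∫ z, K z) = 1

/-- `⌊a⌋`, the largest integer strictly smaller than `a` (for `a > 0`). -/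
def flr (a : ℝ) : ℕ := ⌈a⌉₊ - 1

/-- Partial derivative in direction `j` of a real function on `ℝ^ι`. -/
def rpd {ι : Type} [Fintype ι] [DecidableEq ι] (j : ι) (g : (ι → ℝ) → ℝ) (x : ι → ℝ) : ℝ :=
  fderiv ℝ g x (Pi.single j 1)

/-- The anisotropic Nikolskii class `N_{r,s}(β,L)` of probability densities. -/
def Nikolskii {ι : Type} [Fintype ι] [DecidableEq ι] (r : ι → ℝ≥0∞) (β L : ι → ℝ) :
    Set ((ι → ℝ) → ℝ) :=
  {g | IsDensity g ∧
    (∀ j, ∀ k ≤ flr (β j), eLpNorm ((rpd j)^[k] g) (r j) volume ≤ ENNReal.ofReal (L j)) ∧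
    (∀ j, ∀ z : ℝ,
      eLpNorm (fun x => (rpd j)^[flr (β j)] g (x + z • (Pi.single j 1 : ι → ℝ)) -
        (rpd j)^[flr (β j)] g x) (r j) volume ≤
          ENNReal.ofReal (L j * |z| ^ (β j - flr (β j))))}

/-- Partitions of `{1,…,d}`. -/
abbrev Part (d : ℕ) := Finpartition (Finset.univ : Finset (Fin d))

/-- The operation `P ⋄ P'` on partitions. -/
def diamond {d : ℕ} (P P' : Part d) : Finset (Finset (Fin d)) :=
  ((P.parts ×ˢ P'.parts).image fun z => z.1 ∩ z.2).filter fun I => I.Nonempty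

/-- The class `N_{r,d}(β,L,P)` taking smoothness and independence structure into account. -/
def NikolskiiP {d : ℕ} (𝔓 : Set (Part d)) (r : Fin d → ℝ≥0∞) (β L : Fin d → ℝ) (P : Part d) :
    Set ((Fin d → ℝ) → ℝ) :=
  {g | IsDensity g ∧ (∀ x, g x = ∏ I ∈ P.parts, marginal I g fun j => x ↑j) ∧
    ∀ P' ∈ 𝔓, ∀ P'' ∈ 𝔓, ∀ I ∈ diamond P' P'',
      marginal I g ∈
        Nikolskii (fun j : I => r ↑j) (fun j : I => β ↑j) (fun j : I => L ↑j)}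

/-- The set of partitions encoding an independence structure of `f`. -/
def structSet {d : ℕ} (𝔓 : Set (Part d)) (f : (Fin d → ℝ) → ℝ) : Set (Part d) :=
  {P ∈ 𝔓 | ∀ x, f x = ∏ I ∈ P.parts, marginal I f fun j => x ↑j}

/-- The set `H_p[𝔓]` of admissible pairs `(h,P)`. -/
def HpSet {d : ℕ} (lam : Fin d → ℝ) (p : ℝ≥0∞) (n : ℕ) (𝔓 : Set (Part d)) :
    Set ((Fin d → ℝ) × Part d) :=
  {hP | hP.2 ∈ 𝔓 ∧ ∀ I ∈ hP.2.parts, memGrid lam p n I hP.1}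

/-- The product estimator `f̃_{(h,P)}`. -/
def fHatProd {d : ℕ} (K : ℝ → ℝ) (q : (Fin d → ℝ) → ℝ) {n : ℕ}
    (hP : (Fin d → ℝ) × Part d) (y : Fin n → Fin d → ℝ) (x : Fin d → ℝ) : ℂ :=
  ∏ I ∈ hP.2.parts, fHat I K q hP.1 y fun j => x ↑j

/-- Smoothed estimator `f̃_{h_I,η_I} = K_{η_I} ⋆ f̃_{h_I}`. -/
def fHatConv {d : ℕ} (K : ℝ → ℝ) (q : (Fin d → ℝ) → ℝ) (I : Finset (Fin d))
    (h η : Fin d → ℝ) {n : ℕ} (y : Fin n → Fin d → ℝ) (xI : I → ℝ) : ℂ :=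
  ∫ u : I → ℝ, ((Kh I K η u : ℝ) : ℂ) * fHat I K q h y fun j => xI j - u j

/-- Auxiliary estimator `f̃_{(h,P),(η,P')}`. -/
def fHatProdAux {d : ℕ} (K : ℝ → ℝ) (q : (Fin d → ℝ) → ℝ) {n : ℕ}
    (hP ηP' : (Fin d → ℝ) × Part d) (y : Fin n → Fin d → ℝ) (x : Fin d → ℝ) : ℂ :=
  ∏ I ∈ diamond hP.2 ηP'.2, fHatConv K q I hP.1 ηP'.1 y fun j => x ↑j

/-- `𝔡 = sup_{P ∈ 𝔓} |P|`. -/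
def Dd {d : ℕ} (𝔓 : Set (Part d)) : ℕ := sSup ((fun P : Part d => P.parts.card) '' 𝔓)

/-- The random quantity `Ḡ_p`. -/
def Gbar {d : ℕ} (K : ℝ → ℝ) (q : (Fin d → ℝ) → ℝ) (lam : Fin d → ℝ) (p : ℝ≥0∞)
    (𝔓 : Set (Part d)) {n : ℕ} (y : Fin n → Fin d → ℝ) : ℝ≥0∞ :=
  max 1 (ENNReal.ofReal ((∫ z, |K z|) ^ d) *
    ⨆ hP ∈ HpSet lam p n 𝔓, ⨆ P' ∈ 𝔓, ⨆ I ∈ diamond hP.2 P',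
      eLpNorm (fHat I K q hP.1 y) p volume)

/-- The random threshold `Λ_p = 𝔡 γ_p Ḡ_p^{𝔡(𝔡-1)}`. -/
def LamThr {d : ℕ} (K : ℝ → ℝ) (q : (Fin d → ℝ) → ℝ) (lam : Fin d → ℝ) (p : ℝ≥0∞)
    (𝔓 : Set (Part d)) (γp : ℝ≥0∞) {n : ℕ} (y : Fin n → Fin d → ℝ) : ℝ≥0∞ :=
  (Dd 𝔓 : ℝ≥0∞) * γp * Gbar K q lam p 𝔓 y ^ (Dd 𝔓 * (Dd 𝔓 - 1))

/-- `U_p(h,P) = sup_{I ∈ P} U_p(h_I)`. -/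
def UpPart {d : ℕ} (K : ℝ → ℝ) (q : (Fin d → ℝ) → ℝ) (lam : Fin d → ℝ) (p : ℝ≥0∞) (n : ℕ)
    (hP : (Fin d → ℝ) × Part d) : ℝ≥0∞ :=
  ⨆ I ∈ hP.2.parts, Up K q lam p n I hP.1

/-- The quantity `Δ̃_p(h,P)` of the selection rule. -/
def DeltaT {d : ℕ} (K : ℝ → ℝ) (q : (Fin d → ℝ) → ℝ) (lam : Fin d → ℝ) (p : ℝ≥0∞)
    (𝔓 : Set (Part d)) (γp : ℝ≥0∞) {n : ℕ} (y : Fin n → Fin d → ℝ)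
    (hP : (Fin d → ℝ) × Part d) : ℝ≥0∞ :=
  ⨆ ηP' ∈ HpSet lam p n 𝔓,
    (eLpNorm (fun x => fHatProdAux K q hP ηP' y x - fHatProd K q ηP' y x) p volume -
      LamThr K q lam p 𝔓 γp y * UpPart K q lam p n ηP')

/-- The selection criterion. -/
def crit {d : ℕ} (K : ℝ → ℝ) (q : (Fin d → ℝ) → ℝ) (lam : Fin d → ℝ) (p : ℝ≥0∞)
    (𝔓 : Set (Part d)) (γp : ℝ≥0∞) {n : ℕ} (y : Fin n → Fin d → ℝ)
    (hP : (Fin d → ℝ) × Part d) : ℝ≥0∞ :=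
  DeltaT K q lam p 𝔓 γp y hP + LamThr K q lam p 𝔓 γp y * UpPart K q lam p n hP

/-- `(h̃,P̃)` obeys the data-driven selection rule. -/
def IsSelection {d : ℕ} (K : ℝ → ℝ) (q : (Fin d → ℝ) → ℝ) (lam : Fin d → ℝ) (p : ℝ≥0∞)
    (𝔓 : Set (Part d)) (γp : ℝ≥0∞) {n : ℕ}
    (sel : (Fin n → Fin d → ℝ) → (Fin d → ℝ) × Part d) : Prop :=
  ∀ y, sel y ∈ HpSet lam p n 𝔓 ∧
    crit K q lam p 𝔓 γp y (sel y) = ⨅ hP ∈ HpSet lam p n 𝔓, crit K q lam p 𝔓 γp y hP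

/-- `L_p`-risk of the selected estimator `f̃ = f̃_{(h̃,P̃)}` (`E_f ‖f̃ - f‖_∞` for `p = ∞`). -/
def riskSel {d : ℕ} (K : ℝ → ℝ) (q : (Fin d → ℝ) → ℝ) (p : ℝ≥0∞) {n : ℕ}
    (sel : (Fin n → Fin d → ℝ) → (Fin d → ℝ) × Part d) (f : (Fin d → ℝ) → ℝ) : ℝ≥0∞ :=
  if p = ⊤ then
    ∫⁻ y, eLpNorm (fun x => fHatProd K q (sel y) y x - (f x : ℂ)) ⊤ volume
      ∂obsMeasure d n f q
  else
    (∫⁻ y, eLpNorm (fun x => fHatProd K q (sel y) y x - (f x : ℂ)) p volume ^ p.toReal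
      ∂obsMeasure d n f q) ^ (1 / p.toReal)

/-- The oracle risk `R_p[(h,P),f]`. -/
def riskOracle {d : ℕ} (K : ℝ → ℝ) (q : (Fin d → ℝ) → ℝ) (p : ℝ≥0∞) (𝔓 : Set (Part d))
    (n : ℕ) (hP : (Fin d → ℝ) × Part d) (f : (Fin d → ℝ) → ℝ) : ℝ≥0∞ :=
  if p = ⊤ then
    ∫⁻ y, (⨆ P' ∈ 𝔓, ⨆ I ∈ diamond hP.2 P',
      eLpNorm (fun xI => fHat I K q hP.1 y xI - (marginal I f xI : ℂ)) ⊤ volume)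
      ∂obsMeasure d n f q
  else
    (∫⁻ y, (⨆ P' ∈ 𝔓, ⨆ I ∈ diamond hP.2 P',
      eLpNorm (fun xI => fHat I K q hP.1 y xI - (marginal I f xI : ℂ)) p volume) ^ p.toReal
      ∂obsMeasure d n f q) ^ (1 / p.toReal)

/-- `f_p = 1 ∨ sup_{P,P' ∈ 𝔓} sup_{I ∈ P⋄P'} ‖f_I‖_p` (as an extended real). -/
def fpE {d : ℕ} (p : ℝ≥0∞) (𝔓 : Set (Part d)) (f : (Fin d → ℝ) → ℝ) : ℝ≥0∞ :=
  max 1 (⨆ P ∈ 𝔓, ⨆ P' ∈ 𝔓, ⨆ I ∈ diamond P P', eLpNorm (marginal I f) p volume)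

/-!
Translating `t_j` by the half period `π / x_j` multiplies `exp (-i⟨t, x⟩)` by `-1`. Hence replacing
the integrand `F = K̂_h / q̂_I` by its difference `Δ_j F` multiplies the inverse Fourier integral at
`x` by `-2`. Since `Δ_j` commutes with the other coordinates, taking one difference in each variable
requires only the derivatives of `1 / q̂_I` of order at most one per variable.

With `δ = π / x_j`, each difference gains a factor of order `|δ| / (|δ| + |s|)`. Against the weight
`(1 + s²)^(λ_j/2)` and a Schwartz function rescaled by `h_j`, the integral of this factor is at most
a constant times `h_j^(-λ_j) h_j⁻¹ (1 + |x_j / h_j|)^(-θ)`, for any `θ < 1`. Choosing `θ` in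
`(1/p, 1)` makes the product of these profiles `p`-integrable, and scaling yields the powers of `h`.
-/

/-- The Mikhlin-type condition of order one on the line: `G` and `s ↦ s G'(s)` are both dominated
by `B v`. It is the one-dimensional form of the derivative bounds in Assumption (N2). -/
structure IsMikhlinBounded (v : ℝ → ℝ) (B : ℝ) (G : ℝ → ℂ) : Prop where
  differentiable : Differentiable ℝ G
  norm_le : ∀ s, ‖G s‖ ≤ B * v s
  abs_mul_norm_deriv_le : ∀ s, |s| * ‖deriv G s‖ ≤ B * v s

namespace IsMikhlinBounded

variable {v u : ℝ → ℝ} {B c : ℝ} {F G : ℝ → ℂ}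

lemma mul (hF : IsMikhlinBounded u c F) (hG : IsMikhlinBounded v B G) :
    IsMikhlinBounded (fun s ↦ u s * v s) (2 * c * B) (fun s ↦ F s * G s) where
  differentiable := hF.differentiable.mul hG.differentiable
  norm_le s := by
    have hFG : ‖F s‖ * ‖G s‖ ≤ c * u s * (B * v s) :=
      mul_le_mul (hF.norm_le s) (hG.norm_le s) (norm_nonneg _)
        ((norm_nonneg _).trans (hF.norm_le s))
    have : 0 ≤ ‖F s‖ * ‖G s‖ := by positivity
    rw [norm_mul]
    linarith
  abs_mul_norm_deriv_le s := by
    have hF₀ := (norm_nonneg _).trans (hF.norm_le s)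
    have hF'G : |s| * ‖deriv F s‖ * ‖G s‖ ≤ c * u s * (B * v s) :=
      mul_le_mul (hF.abs_mul_norm_deriv_le s) (hG.norm_le s) (norm_nonneg _) hF₀
    have hFG' : ‖F s‖ * (|s| * ‖deriv G s‖) ≤ c * u s * (B * v s) :=
      mul_le_mul (hF.norm_le s) (hG.abs_mul_norm_deriv_le s) (by positivity) hF₀
    rw [deriv_fun_mul (hF.differentiable s) (hG.differentiable s)]
    calc |s| * ‖deriv F s * G s + F s * deriv G s‖
        ≤ |s| * (‖deriv F s‖ * ‖G s‖ + ‖F s‖ * ‖deriv G s‖) := by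
          gcongr
          exact (norm_add_le _ _).trans_eq (by rw [norm_mul, norm_mul])
      _ ≤ 2 * c * B * (u s * v s) := by linarith

lemma mono (hG : IsMikhlinBounded v B G) (h : ∀ s, B * v s ≤ c * u s) :
    IsMikhlinBounded u c G where
  differentiable := hG.differentiable
  norm_le s := (hG.norm_le s).trans (h s)
  abs_mul_norm_deriv_le s := (hG.abs_mul_norm_deriv_le s).trans (h s)

lemma comp_mul_left (hG : IsMikhlinBounded v B G) (h : ℝ) :
    IsMikhlinBounded (fun s ↦ v (h * s)) B (fun s ↦ G (h * s)) where
  differentiable := hG.differentiable.comp (by fun_prop)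
  norm_le s := hG.norm_le (h * s)
  abs_mul_norm_deriv_le s := by
    rw [deriv_comp_mul_left, norm_smul, Real.norm_eq_abs, ← mul_assoc, mul_comm |s|, ← abs_mul]
    exact hG.abs_mul_norm_deriv_le (h * s)

end IsMikhlinBounded

/-- The factor `|δ| / (|δ| + |s|)` gained at frequency `s` by differencing with step `δ`; the
denominator vanishes only for `δ = s = 0`, where the value is `0`. -/
def shiftRatio (δ s : ℝ) : ℝ := |δ| / (|δ| + |s|)

lemma shiftRatio_nonneg (δ s : ℝ) : 0 ≤ shiftRatio δ s := by
  unfold shiftRatio; positivity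

lemma shiftRatio_le_one (δ s : ℝ) : shiftRatio δ s ≤ 1 :=
  div_le_one_of_le₀ (by linarith [abs_nonneg s]) (by positivity)

lemma measurable_shiftRatio (δ : ℝ) : Measurable (shiftRatio δ) := by
  unfold shiftRatio; fun_prop

lemma shiftRatio_mul_mul {h : ℝ} (hh : 0 < h) (δ s : ℝ) :
    shiftRatio (h * δ) (h * s) = shiftRatio δ s := by
  rw [shiftRatio, abs_mul, abs_mul, ← mul_add, mul_div_mul_left _ _ (abs_pos.2 hh.ne').ne',
    shiftRatio]

lemma shiftRatio_le_mul_one_add_inv (δ : ℝ) {s : ℝ} (hs : s ≠ 0) :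
    shiftRatio δ s ≤ shiftRatio δ 1 * (1 + |s|⁻¹) := by
  have hs' : 0 < |s| := abs_pos.2 hs
  rw [shiftRatio, shiftRatio, abs_one, ← div_self hs'.ne', ← one_div, ← add_div, div_mul_div_comm,
    div_self hs'.ne', div_le_div_iff₀ (by positivity) (by positivity)]
  have : 0 ≤ |δ| * (|δ| + |s| ^ 2) := by positivity
  nlinarith

lemma shiftRatio_le_rpow {θ : ℝ} (hθ₀ : 0 ≤ θ) (hθ₁ : θ ≤ 1) (δ : ℝ) {s : ℝ} (hs : s ≠ 0) :
    shiftRatio δ s ≤ shiftRatio δ 1 ^ θ * (1 + |s| ^ (-θ)) := by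
  have hr := shiftRatio_nonneg δ
  calc shiftRatio δ s ≤ shiftRatio δ s ^ θ :=
        Real.self_le_rpow_of_le_one (hr s) (shiftRatio_le_one δ s) hθ₁
    _ ≤ (shiftRatio δ 1 * (1 + |s|⁻¹)) ^ θ :=
        Real.rpow_le_rpow (hr s) (shiftRatio_le_mul_one_add_inv δ hs) hθ₀
    _ = shiftRatio δ 1 ^ θ * (1 + |s|⁻¹) ^ θ := Real.mul_rpow (hr 1) (by positivity)
    _ ≤ shiftRatio δ 1 ^ θ * (1 + |s| ^ (-θ)) := by
        gcongr
        · exact Real.rpow_nonneg (hr 1) θ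
        · simpa [Real.inv_rpow, Real.rpow_neg] using
            Real.rpow_add_le_add_rpow zero_le_one (inv_nonneg.2 (abs_nonneg s)) hθ₀ hθ₁

lemma integrable_abs_rpow_mul_inv_one_add_sq {θ : ℝ} (hθ₀ : 0 ≤ θ) (hθ₁ : θ < 1) :
    Integrable (fun s : ℝ ↦ |s| ^ (-θ) * (1 + s ^ 2)⁻¹) := by
  have hcont : Continuous (fun t : ℝ ↦ (1 + t ^ 2)⁻¹) := by
    fun_prop (disch := intro t; positivity)
  have hmellin : IntegrableOn (fun t : ℝ ↦ t ^ ((1 - θ) - 1) * (1 + t ^ 2)⁻¹) (Set.Ioi 0) := by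
    refine mellin_convergent_of_isBigO_scalar (a := 2) (b := 0)
      (hcont.locallyIntegrable.locallyIntegrableOn _) ?_ (by linarith) ?_ (by linarith)
    · refine Asymptotics.IsBigO.of_bound 1 ((eventually_gt_atTop 0).mono fun t ht ↦ ?_)
      rw [one_mul, Real.norm_of_nonneg (by positivity), Real.norm_of_nonneg (by positivity),
        Real.rpow_neg ht.le, Real.rpow_two]
      gcongr
      linarith
    · simpa using (hcont.tendsto 0).isBigO_one ℝ |>.mono nhdsWithin_le_nhds
  have := integrable_fun_norm_addHaar (volume : Measure ℝ)
    (f := fun t : ℝ ↦ t ^ (-θ) * (1 + t ^ 2)⁻¹)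
  simpa using this.2 (by simpa using hmellin)

lemma integrable_shiftRatio_mul (δ : ℝ) {v : ℝ → ℝ} (hv : Integrable v) :
    Integrable (fun s ↦ shiftRatio δ s * v s) :=
  hv.bdd_mul (measurable_shiftRatio δ).aestronglyMeasurable (c := 1) <| ae_of_all _ fun s ↦ by
    rw [Real.norm_of_nonneg (shiftRatio_nonneg δ s)]
    exact shiftRatio_le_one δ s

lemma exists_integral_shiftRatio_le {θ : ℝ} (hθ₀ : 0 ≤ θ) (hθ₁ : θ < 1) :
    ∃ C, 0 ≤ C ∧ ∀ δ, ∫ s, shiftRatio δ s * (1 + s ^ 2)⁻¹ ≤ C * shiftRatio δ 1 ^ θ := by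
  have hint : Integrable (fun s : ℝ ↦ (1 + |s| ^ (-θ)) * (1 + s ^ 2)⁻¹) := by
    simp only [add_mul, one_mul]
    exact integrable_inv_one_add_sq.add (integrable_abs_rpow_mul_inv_one_add_sq hθ₀ hθ₁)
  refine ⟨∫ s, (1 + |s| ^ (-θ)) * (1 + s ^ 2)⁻¹, integral_nonneg fun s ↦ by positivity, fun δ ↦ ?_⟩
  rw [mul_comm, ← integral_const_mul]
  refine integral_mono_ae (integrable_shiftRatio_mul δ integrable_inv_one_add_sq)
    (hint.const_mul _) ?_
  filter_upwards [compl_mem_ae_iff.2 (measure_singleton (0 : ℝ))] with s hs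
  rw [← mul_assoc]
  gcongr
  exact shiftRatio_le_rpow hθ₀ hθ₁.le δ hs

lemma IsMikhlinBounded.norm_shift_sub_le_of_near {v : ℝ → ℝ} {B : ℝ} {G : ℝ → ℂ}
    (hG : IsMikhlinBounded v B G) {δ s : ℝ} (hδ : δ ≠ 0) (hs : |s| ≤ 2 * |δ|) :
    ‖G (s + δ) - G s‖ ≤
      4 * (shiftRatio δ s * (B * v s) + shiftRatio δ (s + δ) * (B * v (s + δ))) := by
  have hδ₀ : 0 < |δ| := abs_pos.2 hδ
  have le_four_mul {u : ℝ} (hu : |u| ≤ 3 * |δ|) : ‖G u‖ ≤ 4 * (shiftRatio δ u * (B * v u)) := by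
    have hratio : 1 ≤ 4 * shiftRatio δ u := by
      rw [shiftRatio, ← mul_div_assoc, one_le_div (by positivity)]
      linarith
    calc ‖G u‖ ≤ B * v u := hG.norm_le u
      _ ≤ 4 * shiftRatio δ u * (B * v u) :=
          le_mul_of_one_le_left ((norm_nonneg _).trans (hG.norm_le u)) hratio
      _ = _ := by ring
  linarith [norm_sub_le (G (s + δ)) (G s), le_four_mul (u := s) (by linarith),
    le_four_mul (u := s + δ) (by linarith [abs_add_le s δ])]

lemma IsMikhlinBounded.norm_shift_sub_le_of_far {v : ℝ → ℝ} {B D : ℝ} {G : ℝ → ℂ}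
    (hG : IsMikhlinBounded v B G) (hB : 0 ≤ B)
    (hdoubling : ∀ s u, |s| ≤ 2 * |u| → v u ≤ D * v s) {δ s : ℝ} (hs : 2 * |δ| < |s|) :
    ‖G (s + δ) - G s‖ ≤ 3 * D * (shiftRatio δ s * (B * v s)) := by
  have hs₀ : 0 < |s| := by linarith [abs_nonneg δ]
  have hderiv : ∀ u ∈ Metric.closedBall s |δ|, ‖deriv G u‖ ≤ 2 * (B * (D * v s)) / |s| := by
    intro u hu
    have hsu : |s| ≤ 2 * |u| := by
      have : |s - u| ≤ |δ| := by simpa [Real.dist_eq, abs_sub_comm] using hu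
      linarith [abs_sub_abs_le_abs_sub s u]
    rw [le_div_iff₀ hs₀]
    calc ‖deriv G u‖ * |s| ≤ ‖deriv G u‖ * (2 * |u|) := by gcongr
      _ = 2 * (|u| * ‖deriv G u‖) := by ring
      _ ≤ 2 * (B * (D * v s)) :=
          mul_le_mul_of_nonneg_left ((hG.abs_mul_norm_deriv_le u).trans
            (mul_le_mul_of_nonneg_left (hdoubling s u hsu) hB)) zero_le_two
  have hmean : ‖G (s + δ) - G s‖ ≤ 2 * (B * (D * v s)) / |s| * |δ| := by
    simpa using (convex_closedBall s |δ|).norm_image_sub_le_of_norm_deriv_le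
      (fun u _ ↦ hG.differentiable u) hderiv (Metric.mem_closedBall_self (abs_nonneg δ))
      (y := s + δ) (by simp)
  have hratio : 2 * (|δ| / |s|) ≤ 3 * shiftRatio δ s := by
    rw [shiftRatio, ← mul_div_assoc, ← mul_div_assoc, div_le_div_iff₀ hs₀ (by positivity)]
    nlinarith [abs_nonneg δ]
  have hDv : 0 ≤ B * (D * v s) :=
    ((norm_nonneg _).trans (hG.norm_le s)).trans
      (mul_le_mul_of_nonneg_left (hdoubling s s (by linarith)) hB)
  calc ‖G (s + δ) - G s‖ ≤ B * (D * v s) * (2 * (|δ| / |s|)) := hmean.trans_eq (by ring)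
    _ ≤ B * (D * v s) * (3 * shiftRatio δ s) := mul_le_mul_of_nonneg_left hratio hDv
    _ = 3 * D * (shiftRatio δ s * (B * v s)) := by ring

lemma IsMikhlinBounded.norm_shift_sub_le {v : ℝ → ℝ} {B D : ℝ} {G : ℝ → ℂ}
    (hG : IsMikhlinBounded v B G) (hB : 0 ≤ B) (hD : 0 ≤ D)
    (hdoubling : ∀ s u, |s| ≤ 2 * |u| → v u ≤ D * v s) {δ : ℝ} (hδ : δ ≠ 0) (s : ℝ) :
    ‖G (s + δ) - G s‖ ≤
      (4 + 3 * D) * (shiftRatio δ s * (B * v s) + shiftRatio δ (s + δ) * (B * v (s + δ))) := by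
  have hnonneg (u : ℝ) : 0 ≤ shiftRatio δ u * (B * v u) :=
    mul_nonneg (shiftRatio_nonneg δ u) ((norm_nonneg _).trans (hG.norm_le u))
  rcases le_or_gt |s| (2 * |δ|) with hnear | hfar
  · refine (hG.norm_shift_sub_le_of_near hδ hnear).trans ?_
    nlinarith [mul_nonneg hD (hnonneg s), mul_nonneg hD (hnonneg (s + δ))]
  · refine (hG.norm_shift_sub_le_of_far hB hdoubling hfar).trans ?_
    nlinarith [mul_nonneg hD (hnonneg (s + δ)), hnonneg s, hnonneg (s + δ)]

lemma exists_norm_schwartz_le_rpow (f : SchwartzMap ℝ ℂ) (r : ℝ) :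
    ∃ c, 0 ≤ c ∧ ∀ s, ‖f s‖ ≤ c * (1 + s ^ 2) ^ (-r) := by
  let g := SchwartzMap.smulLeftCLM ℂ (fun s : ℝ ↦ (1 + ‖s‖ ^ 2) ^ r) f
  refine ⟨SchwartzMap.seminorm ℝ 0 0 g, apply_nonneg _ _, fun s ↦ ?_⟩
  have hg : g s = ((1 + s ^ 2) ^ r) • f s := by
    simpa [g] using SchwartzMap.smulLeftCLM_apply_apply
      (Function.hasTemperateGrowth_one_add_norm_sq_rpow ℝ r) f s
  have hpos : 0 < (1 + s ^ 2) ^ r := by positivity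
  have := SchwartzMap.norm_le_seminorm ℝ g s
  rw [hg, norm_smul, Real.norm_of_nonneg hpos.le] at this
  rwa [Real.rpow_neg (by positivity), ← div_eq_mul_inv, le_div_iff₀ hpos, mul_comm]

lemma exists_isMikhlinBounded_schwartz (f : SchwartzMap ℝ ℂ) (r : ℝ) :
    ∃ c, 0 ≤ c ∧ IsMikhlinBounded (fun s ↦ (1 + s ^ 2) ^ (-r)) c f := by
  obtain ⟨c₀, hc₀, hf⟩ := exists_norm_schwartz_le_rpow f r
  obtain ⟨c₁, -, hf'⟩ := exists_norm_schwartz_le_rpow (SchwartzMap.derivCLM ℝ ℂ f) (r + 1)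
  refine ⟨max c₀ c₁, le_max_of_le_left hc₀, f.differentiable, fun s ↦ ?_, fun s ↦ ?_⟩
  · exact (hf s).trans (by gcongr; exact le_max_left _ _)
  · have hs : |s| ≤ 1 + s ^ 2 := by nlinarith [sq_abs s, sq_nonneg (|s| - 1)]
    calc |s| * ‖deriv f s‖ ≤ (1 + s ^ 2) * (c₁ * (1 + s ^ 2) ^ (-(r + 1))) := by
          gcongr
          exact hf' s
      _ = c₁ * (1 + s ^ 2) ^ (-r) := by
          rw [show -r = 1 + -(r + 1) by ring, Real.rpow_add (by positivity), Real.rpow_one]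
          ring
      _ ≤ max c₀ c₁ * (1 + s ^ 2) ^ (-r) := by
          gcongr
          exact le_max_right _ _

/-- The Fourier transform `∫ e^{isx} K(x) dx` of a real Schwartz function, as a Schwartz function;
the rescaling by `2π` passes from Mathlib's normalisation to this one. -/
def schwartzFT (K : SchwartzMap ℝ ℝ) : SchwartzMap ℝ ℂ :=
  SchwartzMap.compCLMOfContinuousLinearEquiv ℝ
    (ContinuousLinearEquiv.unitsEquivAut ℝ (Units.mk0 (2 * Real.pi)⁻¹ (by positivity)))
    (FourierTransformInv.fourierInv (SchwartzMap.postcompCLM Complex.ofRealCLM K))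

lemma schwartzFT_apply (K : SchwartzMap ℝ ℝ) (s : ℝ) :
    schwartzFT K s = ∫ x : ℝ, Complex.exp (Complex.I * (s * x : ℝ)) * (K x : ℂ) := by
  have hpi : (Real.pi : ℂ) ≠ 0 := mod_cast Real.pi_ne_zero
  change (FourierTransformInv.fourierInv (SchwartzMap.postcompCLM Complex.ofRealCLM K) :
    SchwartzMap ℝ ℂ) (s * (2 * Real.pi)⁻¹) = _
  rw [SchwartzMap.fourierInv_coe, Real.fourierInv_eq']
  refine integral_congr_ae (ae_of_all _ fun x ↦ ?_)
  simp only [SchwartzMap.postcompCLM_apply, Complex.ofRealCLM_apply, smul_eq_mul]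
  congr 2
  simp
  field_simp

lemma one_add_sq_rpow_le {h : ℝ} (h₀ : 0 < h) (h₁ : h ≤ 1) {lam : ℝ} (hlam : 0 ≤ lam) (s : ℝ) :
    (1 + s ^ 2) ^ (lam / 2) ≤ h ^ (-lam) * (1 + (h * s) ^ 2) ^ (lam / 2) := by
  have hsq : h ^ 2 * (1 + s ^ 2) ≤ 1 + (h * s) ^ 2 := by nlinarith
  rw [Real.rpow_neg h₀.le, ← div_eq_inv_mul, le_div_iff₀ (by positivity), mul_comm]
  calc h ^ lam * (1 + s ^ 2) ^ (lam / 2) = (h ^ 2 * (1 + s ^ 2)) ^ (lam / 2) := by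
        rw [Real.mul_rpow (by positivity) (by positivity), ← Real.rpow_natCast_mul h₀.le]
        congr 2
        push_cast
        ring
    _ ≤ (1 + (h * s) ^ 2) ^ (lam / 2) := Real.rpow_le_rpow (by positivity) hsq (by positivity)

lemma one_add_sq_rpow_mul_le {h : ℝ} (h₀ : 0 < h) (h₁ : h ≤ 1) {lam : ℝ} (hlam : 0 ≤ lam) (s : ℝ) :
    (1 + (h * s) ^ 2) ^ (-(lam / 2 + 1)) * (1 + s ^ 2) ^ (lam / 2) ≤
      h ^ (-lam) * (1 + (h * s) ^ 2)⁻¹ := by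
  have hpos : 0 < 1 + (h * s) ^ 2 := by positivity
  calc (1 + (h * s) ^ 2) ^ (-(lam / 2 + 1)) * (1 + s ^ 2) ^ (lam / 2)
      ≤ (1 + (h * s) ^ 2) ^ (-(lam / 2 + 1)) * (h ^ (-lam) * (1 + (h * s) ^ 2) ^ (lam / 2)) := by
        gcongr
        exact one_add_sq_rpow_le h₀ h₁ hlam s
    _ = h ^ (-lam) * ((1 + (h * s) ^ 2) ^ (-(lam / 2 + 1)) * (1 + (h * s) ^ 2) ^ (lam / 2)) := by
        ring
    _ = h ^ (-lam) * (1 + (h * s) ^ 2)⁻¹ := by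
        rw [← Real.rpow_add hpos, ← Real.rpow_neg_one]
        congr 2
        ring

lemma integrable_inv_one_add_mul_sq {h : ℝ} (hh : h ≠ 0) :
    Integrable (fun s : ℝ ↦ (1 + (h * s) ^ 2)⁻¹) :=
  integrable_inv_one_add_sq.comp_mul_left' hh

lemma integrable_schwartz_comp_mul_left_mul_rpow (φ : SchwartzMap ℝ ℂ) {h : ℝ} (h₀ : 0 < h)
    (h₁ : h ≤ 1) {lam : ℝ} (hlam : 0 ≤ lam) :
    Integrable (fun s : ℝ ↦ ‖φ (h * s)‖ * (1 + s ^ 2) ^ (lam / 2)) := by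
  obtain ⟨c, hc, hφ⟩ := exists_norm_schwartz_le_rpow φ (lam / 2 + 1)
  have hcont : Continuous fun s : ℝ ↦ ‖φ (h * s)‖ * (1 + s ^ 2) ^ (lam / 2) := by
    fun_prop (disch := positivity)
  refine ((integrable_inv_one_add_mul_sq h₀.ne').const_mul (c * h ^ (-lam))).mono'
    hcont.aestronglyMeasurable (ae_of_all _ fun s ↦ ?_)
  rw [Real.norm_of_nonneg (by positivity)]
  calc ‖φ (h * s)‖ * (1 + s ^ 2) ^ (lam / 2)
      ≤ c * (1 + (h * s) ^ 2) ^ (-(lam / 2 + 1)) * (1 + s ^ 2) ^ (lam / 2) := by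
        gcongr
        exact hφ _
    _ ≤ c * (h ^ (-lam) * (1 + (h * s) ^ 2)⁻¹) := by
        rw [mul_assoc]
        exact mul_le_mul_of_nonneg_left (one_add_sq_rpow_mul_le h₀ h₁ hlam s) hc
    _ = c * h ^ (-lam) * (1 + (h * s) ^ 2)⁻¹ := by ring

/-- `w` dominates the increments, with step `δ`, of `φ G`, uniformly over all `G` that are
Mikhlin-bounded with weight `v`. It is the one-dimensional estimate that is iterated over the
coordinates. -/
def IsDifferenceMajorant (φ : ℝ → ℂ) (δ : ℝ) (v w : ℝ → ℝ) : Prop :=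
  ∀ (B : ℝ) (G : ℝ → ℂ), IsMikhlinBounded v B G →
    ∀ s, ‖φ (s + δ) * G (s + δ) - φ s * G s‖ ≤ B * w s

lemma IsDifferenceMajorant.nonneg {φ : ℝ → ℂ} {δ : ℝ} {v w : ℝ → ℝ}
    (hw : IsDifferenceMajorant φ δ v w) (hv : ∀ s, 0 ≤ v s) (s : ℝ) : 0 ≤ w s := by
  simpa using hw 1 (fun _ ↦ 0) ⟨differentiable_const 0, by simpa using hv, by simpa using hv⟩ s

lemma inv_one_add_mul_sq_doubling (h : ℝ) {s u : ℝ} (hsu : |s| ≤ 2 * |u|) :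
    (1 + (h * u) ^ 2)⁻¹ ≤ 4 * (1 + (h * s) ^ 2)⁻¹ := by
  have hsq : s ^ 2 ≤ 4 * u ^ 2 := by
    have := sq_le_sq' (by linarith [abs_nonneg s, abs_nonneg u]) hsu
    rwa [sq_abs, mul_pow, sq_abs, show (2 : ℝ) ^ 2 = 4 by norm_num] at this
  rw [← div_eq_mul_inv, inv_eq_one_div, div_le_div_iff₀ (by positivity) (by positivity)]
  nlinarith [mul_le_mul_of_nonneg_left hsq (sq_nonneg h)]

lemma isDifferenceMajorant_comp_mul_left {φ : ℝ → ℂ} {c lam : ℝ} (hc : 0 ≤ c) (hlam : 0 ≤ lam)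
    (hφ : IsMikhlinBounded (fun s ↦ (1 + s ^ 2) ^ (-(lam / 2 + 1))) c φ)
    {h : ℝ} (h₀ : 0 < h) (h₁ : h ≤ 1) {δ : ℝ} (hδ : δ ≠ 0) :
    IsDifferenceMajorant (fun s ↦ φ (h * s)) δ (fun s ↦ (1 + s ^ 2) ^ (lam / 2)) fun s ↦
      32 * c * h ^ (-lam) * (shiftRatio δ s * (1 + (h * s) ^ 2)⁻¹ +
        shiftRatio δ (s + δ) * (1 + (h * (s + δ)) ^ 2)⁻¹) := by
  intro B G hG s
  have hB : 0 ≤ B := by simpa using (norm_nonneg _).trans (hG.norm_le 0)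
  have hφG : IsMikhlinBounded (fun s ↦ (1 + (h * s) ^ 2)⁻¹) (2 * c * B * h ^ (-lam))
      fun s ↦ φ (h * s) * G s :=
    ((hφ.comp_mul_left h).mul hG).mono fun s ↦ by
      rw [mul_assoc _ (h ^ (-lam))]
      exact mul_le_mul_of_nonneg_left (one_add_sq_rpow_mul_le h₀ h₁ hlam s) (by positivity)
  exact (hφG.norm_shift_sub_le (by positivity) (D := 4) (by norm_num)
    (fun _ _ hsu ↦ inv_one_add_mul_sq_doubling h hsu) hδ s).trans_eq (by ring)

lemma integral_shiftRatio_mul_comp_mul_left {h : ℝ} (hh : 0 < h) (δ : ℝ) :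
    ∫ s, shiftRatio δ s * (1 + (h * s) ^ 2)⁻¹ =
      h⁻¹ * ∫ s, shiftRatio (h * δ) s * (1 + s ^ 2)⁻¹ := by
  simp_rw [← shiftRatio_mul_mul hh δ]
  rw [Measure.integral_comp_mul_left (fun s ↦ shiftRatio (h * δ) s * (1 + s ^ 2)⁻¹),
    abs_of_pos (inv_pos.2 hh), smul_eq_mul]

lemma shiftRatio_pi_div_le {y : ℝ} (hy : y ≠ 0) :
    shiftRatio (Real.pi / y) 1 ≤ Real.pi * (1 + |y|)⁻¹ := by
  have hy' : 0 < |y| := abs_pos.2 hy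
  have hpi := Real.pi_gt_three
  rw [shiftRatio, abs_div, abs_of_pos Real.pi_pos, abs_one, ← div_eq_mul_inv,
    div_add_one hy'.ne', div_div_div_cancel_right₀ hy'.ne']
  gcongr
  linarith

lemma exists_integral_shiftRatio_mul_le {θ : ℝ} (hθ₀ : 0 ≤ θ) (hθ₁ : θ < 1) :
    ∃ C, 0 ≤ C ∧ ∀ h, 0 < h → ∀ x ≠ 0, ∫ s, shiftRatio (Real.pi / x) s * (1 + (h * s) ^ 2)⁻¹ ≤
      C * (h⁻¹ * (1 + |x / h|) ^ (-θ)) := by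
  obtain ⟨C, hC, hint⟩ := exists_integral_shiftRatio_le hθ₀ hθ₁
  refine ⟨C * Real.pi ^ θ, by positivity, fun h hh x hx ↦ ?_⟩
  have hratio : shiftRatio (h * (Real.pi / x)) 1 ^ θ ≤ Real.pi ^ θ * (1 + |x / h|) ^ (-θ) := by
    rw [show h * (Real.pi / x) = Real.pi / (x / h) by field_simp]
    refine (Real.rpow_le_rpow (shiftRatio_nonneg _ _)
      (shiftRatio_pi_div_le (div_ne_zero hx hh.ne')) hθ₀).trans_eq ?_
    rw [Real.mul_rpow Real.pi_pos.le (by positivity), Real.inv_rpow (by positivity),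
      Real.rpow_neg (by positivity)]
  rw [integral_shiftRatio_mul_comp_mul_left hh]
  calc h⁻¹ * ∫ s, shiftRatio (h * (Real.pi / x)) s * (1 + s ^ 2)⁻¹
      ≤ h⁻¹ * (C * (Real.pi ^ θ * (1 + |x / h|) ^ (-θ))) := by
        gcongr
        exact (hint _).trans (by gcongr)
    _ = C * Real.pi ^ θ * (h⁻¹ * (1 + |x / h|) ^ (-θ)) := by ring

lemma exists_isDifferenceMajorant_schwartz (φ : SchwartzMap ℝ ℂ) {lam θ : ℝ} (hlam : 0 ≤ lam)
    (hθ₀ : 0 ≤ θ) (hθ₁ : θ < 1) :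
    ∃ C, 0 ≤ C ∧ ∀ h, 0 < h → h ≤ 1 → ∀ x ≠ 0, ∃ w, Integrable w ∧
      ∫ s, w s ≤ C * (h ^ (-lam) * h⁻¹ * (1 + |x / h|) ^ (-θ)) ∧
      IsDifferenceMajorant (fun s ↦ φ (h * s)) (Real.pi / x)
        (fun s ↦ (1 + s ^ 2) ^ (lam / 2)) w := by
  obtain ⟨c, hc, hφ⟩ := exists_isMikhlinBounded_schwartz φ (lam / 2 + 1)
  obtain ⟨C, hC, hint⟩ := exists_integral_shiftRatio_mul_le hθ₀ hθ₁
  refine ⟨64 * c * C, by positivity, fun h h₀ h₁ x hx ↦ ?_⟩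
  let g : ℝ → ℝ := fun s ↦ shiftRatio (Real.pi / x) s * (1 + (h * s) ^ 2)⁻¹
  have hg : Integrable g := integrable_shiftRatio_mul _ (integrable_inv_one_add_mul_sq h₀.ne')
  refine ⟨_, ?_, ?_, isDifferenceMajorant_comp_mul_left hc hlam hφ h₀ h₁
    (div_ne_zero Real.pi_ne_zero hx)⟩
  · exact (hg.add (hg.comp_add_right _)).const_mul _
  · change ∫ s, 32 * c * h ^ (-lam) * (g s + g (s + Real.pi / x)) ≤ _
    rw [integral_const_mul, integral_add hg (hg.comp_add_right _), integral_add_right_eq_self]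
    calc 32 * c * h ^ (-lam) * ((∫ s, g s) + ∫ s, g s)
        = 64 * c * h ^ (-lam) * ∫ s, g s := by ring
      _ ≤ 64 * c * h ^ (-lam) * (C * (h⁻¹ * (1 + |x / h|) ^ (-θ))) := by
          gcongr
          exact hint h h₀ x hx
      _ = 64 * c * C * (h ^ (-lam) * h⁻¹ * (1 + |x / h|) ^ (-θ)) := by ring

section MixedDifferences

variable {ι : Type} [DecidableEq ι]

/-- The partial difference of `F` in the coordinate `j`, with step `δ j`. -/
def shiftDiff (δ : ι → ℝ) (j : ι) (F : (ι → ℝ) → ℂ) (t : ι → ℝ) : ℂ :=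
  F (Function.update t j (t j + δ j)) - F t

lemma shiftDiff_apply (δ : ι → ℝ) (j : ι) (F : (ι → ℝ) → ℂ) (t : ι → ℝ) :
    shiftDiff δ j F t = F (t + Pi.single j (δ j)) - F t := by
  have hshift : Function.update t j (t j + δ j) = t + Pi.single j (δ j) := by
    ext k
    by_cases hk : k = j
    · subst hk
      simp
    · simp [hk]
  rw [shiftDiff, hshift]

/-- The operator `g ↦ Δ_j (φ_j g)`, where `φ_j` acts as a function of the `j`-th coordinate and
`Δ_j` is the partial difference with step `δ j`. -/
def weightedDiff (φ : ι → ℝ → ℂ) (δ : ι → ℝ) (j : ι) (g : (ι → ℝ) → ℂ) : (ι → ℝ) → ℂ :=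
  shiftDiff δ j fun t ↦ φ j (t j) * g t

lemma weightedDiff_apply (φ : ι → ℝ → ℂ) (δ : ι → ℝ) (j : ι) (g : (ι → ℝ) → ℂ) (t : ι → ℝ) :
    weightedDiff φ δ j g t =
      φ j (t j + δ j) * g (Function.update t j (t j + δ j)) - φ j (t j) * g t := by
  simp only [weightedDiff, shiftDiff, Function.update_self]

/-- `g'` is the partial derivative of `g` in the coordinate `j`. -/
def HasPartialDeriv (j : ι) (g g' : (ι → ℝ) → ℂ) : Prop :=
  ∀ t s, HasDerivAt (fun s ↦ g (Function.update t j s)) (g' (Function.update t j s)) s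

lemma HasPartialDeriv.weightedDiff {φ : ι → ℝ → ℂ} {δ : ι → ℝ} {j k : ι} (hkj : k ≠ j)
    {g g' : (ι → ℝ) → ℂ} (hg : HasPartialDeriv j g g') :
    HasPartialDeriv j (weightedDiff φ δ k g) (weightedDiff φ δ k g') := fun t s ↦ by
  simp only [weightedDiff_apply, Function.update_of_ne hkj, Function.update_comm hkj.symm]
  exact ((hg _ s).const_mul _).sub ((hg t s).const_mul _)

lemma HasPartialDeriv.foldr_weightedDiff {φ : ι → ℝ → ℂ} {δ : ι → ℝ} {j : ι}
    {g g' : (ι → ℝ) → ℂ} (hg : HasPartialDeriv j g g') {r : List ι} (hj : j ∉ r) :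
    HasPartialDeriv j (r.foldr (Deconv.weightedDiff φ δ) g)
      (r.foldr (Deconv.weightedDiff φ δ) g') := by
  induction r with
  | nil => exact hg
  | cons k r ih =>
    obtain ⟨hjk, hjr⟩ := not_or.1 (mt List.mem_cons.2 hj)
    exact (ih hjr).weightedDiff (Ne.symm hjk)

lemma prod_map_update {r : List ι} {j : ι} (hj : j ∉ r) (f : ι → ℝ → ℝ) (t : ι → ℝ) (s : ℝ) :
    (r.map fun k ↦ f k (Function.update t j s k)).prod = (r.map fun k ↦ f k (t k)).prod := by
  congr 1
  exact List.map_congr_left fun k hk ↦ by rw [Function.update_of_ne (ne_of_mem_of_not_mem hk hj)]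

lemma filter_mem_eq_of_sublist {s l : List ι} (hs : s.Sublist l) (hl : l.Nodup) :
    l.filter (· ∈ s) = s := by
  have hsub : s.Sublist (l.filter (· ∈ s)) := by
    simpa only [List.filter_eq_self.2 fun j (hj : j ∈ s) ↦ decide_eq_true hj] using
      hs.filter (· ∈ s)
  refine (hsub.eq_of_length (List.Perm.length_eq ?_)).symm
  rw [List.perm_ext_iff_of_nodup (hl.sublist hs) (hl.filter _)]
  exact fun j ↦ by simpa using fun hj ↦ hs.subset hj

variable [Fintype ι]

lemma hasPartialDeriv_cpd (j : ι) {g : (ι → ℝ) → ℂ} (hg : Differentiable ℝ g) :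
    HasPartialDeriv j g (cpd j g) := fun t s ↦
  (hg (Function.update t j s)).hasFDerivAt.comp_hasDerivAt s (hasDerivAt_update t j s)

lemma contDiff_cpd {n : ℕ} {g : (ι → ℝ) → ℂ} (hg : ContDiff ℝ (n + 1) g) (j : ι) :
    ContDiff ℝ n (cpd j g) :=
  (hg.fderiv_right le_rfl).clm_apply contDiff_const

/-- Mixed partial derivative of order one in each direction of the list; the head of the list is
differentiated first. -/
def mixedPartial (s : List ι) (M : (ι → ℝ) → ℂ) : (ι → ℝ) → ℂ :=
  s.foldl (fun ψ j ↦ cpd j ψ) M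

/-- The mixed Mikhlin condition along the directions of `r`, for the points that agree with `t` off
`r`: every `t^s D^s M` with `s` a sublist of `r` is dominated by `A ∏ v_k`. The factor `a` keeps
the condition stable when a direction is removed from `r`. -/
def HasMixedBounds (v : ι → ℝ → ℝ) (r : List ι) (a A : ℝ) (M : (ι → ℝ) → ℂ) (t : ι → ℝ) : Prop :=
  ∀ u : ι → ℝ, (∀ j ∉ r, u j = t j) → ∀ s, s.Sublist r →
    a * (‖mixedPartial s M u‖ * (s.map fun k ↦ |u k|).prod) ≤ A * (r.map fun k ↦ v k (u k)).prod

namespace HasMixedBounds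

variable {v : ι → ℝ → ℝ} {r : List ι} {k : ι} {a A : ℝ} {M : (ι → ℝ) → ℂ} {t : ι → ℝ}

lemma update (h : HasMixedBounds v (k :: r) a A M t) (hk : k ∉ r) (x : ℝ) :
    HasMixedBounds v r a (A * v k x) M (Function.update t k x) := fun u hu s hs ↦ by
  have hux : u k = x := by simpa using hu k hk
  refine (h u (fun j hj ↦ ?_) s (hs.cons k)).trans_eq (by simp [hux, mul_assoc])
  obtain ⟨hjk, hjr⟩ := not_or.1 (mt List.mem_cons.2 hj)
  rw [hu j hjr, Function.update_of_ne hjk]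

lemma update_cpd (h : HasMixedBounds v (k :: r) a A M t) (hk : k ∉ r) (x : ℝ) :
    HasMixedBounds v r (a * |x|) (A * v k x) (cpd k M) (Function.update t k x) := fun u hu s hs ↦ by
  have hux : u k = x := by simpa using hu k hk
  have hbound := h u (fun j hj ↦ ?_) (k :: s) (hs.cons_cons k)
  · simp only [List.map_cons, List.prod_cons, hux] at hbound
    calc a * |x| * (‖mixedPartial s (cpd k M) u‖ * (s.map fun k ↦ |u k|).prod)
        = a * (‖mixedPartial (k :: s) M u‖ * (|x| * (s.map fun k ↦ |u k|).prod)) := by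
          simp only [mixedPartial, List.foldl_cons]
          ring
      _ ≤ A * (v k x * (r.map fun k ↦ v k (u k)).prod) := hbound
      _ = A * v k x * (r.map fun k ↦ v k (u k)).prod := by ring
  · obtain ⟨hjk, hjr⟩ := not_or.1 (mt List.mem_cons.2 hj)
    rw [hu j hjr, Function.update_of_ne hjk]

/-- Differencing in a direction that has not been differenced yet commutes with differentiating in
it, so the one-dimensional estimate applies to the section in the direction of the head of `r`. -/
lemma norm_foldr_weightedDiff_le {φ : ι → ℝ → ℂ} {δ : ι → ℝ} {w : ι → ℝ → ℝ}
    (hw : ∀ j, IsDifferenceMajorant (φ j) (δ j) (v j) (w j)) (hr : r.Nodup)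
    (hM : ContDiff ℝ r.length M) (ha : 0 ≤ a) (h : HasMixedBounds v r a A M t) :
    a * ‖r.foldr (weightedDiff φ δ) M t‖ ≤ A * (r.map fun k ↦ w k (t k)).prod := by
  induction r generalizing a A M t with
  | nil => simpa [mixedPartial] using h t (fun _ _ ↦ rfl) [] (List.Sublist.refl _)
  | cons k r ih =>
    obtain ⟨hk, hr⟩ := List.nodup_cons.1 hr
    set U := r.foldr (weightedDiff φ δ) M
    set W := (r.map fun k ↦ w k (t k)).prod
    have hM₁ : ContDiff ℝ (r.length + 1) M := by simpa using hM
    have hderiv (x : ℝ) : HasDerivAt (fun x ↦ a * U (Function.update t k x))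
        (a * r.foldr (weightedDiff φ δ) (cpd k M) (Function.update t k x)) x :=
      ((hasPartialDeriv_cpd k (hM₁.differentiable (by simp))).foldr_weightedDiff hk t x).const_mul _
    have hsection : IsMikhlinBounded (v k) (A * W) fun x ↦ a * U (Function.update t k x) := by
      refine ⟨fun x ↦ (hderiv x).differentiableAt, fun x ↦ ?_, fun x ↦ ?_⟩
      · have := ih hr (hM₁.of_le (by simp)) ha (h.update hk x)
        rw [prod_map_update hk] at this
        rw [norm_mul, Complex.norm_of_nonneg ha]
        linarith
      · have := ih hr (contDiff_cpd hM₁ k) (by positivity) (h.update_cpd hk x)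
        rw [prod_map_update hk] at this
        rw [(hderiv x).deriv, norm_mul, Complex.norm_of_nonneg ha]
        linarith
    have hincrement := hw k _ _ hsection (t k)
    calc a * ‖weightedDiff φ δ k U t‖
        = ‖φ k (t k + δ k) * (a * U (Function.update t k (t k + δ k))) -
            φ k (t k) * (a * U (Function.update t k (t k)))‖ := by
          rw [Function.update_eq_self, weightedDiff_apply, ← Complex.norm_of_nonneg ha, ← norm_mul,
            Complex.norm_of_nonneg ha]
          congr 1
          ring
      _ ≤ A * W * w k (t k) := hincrement
      _ = A * ((k :: r).map fun k ↦ w k (t k)).prod := by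
          rw [List.map_cons, List.prod_cons]
          ring

end HasMixedBounds

lemma multiPD_indicator {s : List ι} (hs : s.Sublist univ.toList) (M : (ι → ℝ) → ℂ) :
    multiPD (fun j ↦ if j ∈ s then 1 else 0) M = mixedPartial s.reverse M := by
  rw [mixedPartial, List.foldl_reverse, ← filter_mem_eq_of_sublist hs (nodup_toList _),
    List.foldr_filter, multiPD]
  congr 1
  ext j ψ : 2
  split_ifs <;> simp_all

/-- The mixed Mikhlin condition: all the derivatives of `M` of order at most one in each variable
satisfy the bound of Assumption (N2), with weights `v j`. -/
structure IsMixedMikhlinBounded (v : ι → ℝ → ℝ) (A : ℝ) (M : (ι → ℝ) → ℂ) : Prop where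
  contDiff : ContDiff ℝ (Fintype.card ι) M
  norm_le : ∀ α : ι → ℕ, (∀ j, α j ≤ 1) → ∀ t : ι → ℝ,
    ‖multiPD α M t * ∏ j, (t j : ℂ) ^ α j‖ ≤ A * ∏ j, v j (t j)

namespace IsMixedMikhlinBounded

variable {v : ι → ℝ → ℝ} {A : ℝ} {M : (ι → ℝ) → ℂ}

lemma hasMixedBounds (hM : IsMixedMikhlinBounded v A M) (t : ι → ℝ) :
    HasMixedBounds v univ.toList.reverse 1 A M t := fun u _ s hs ↦ by
  have hs' : s.reverse.Sublist univ.toList := by simpa using hs.reverse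
  have hnodup : s.Nodup := (List.nodup_reverse.2 (nodup_toList univ)).sublist hs
  have hbound := hM.norm_le (fun j ↦ if j ∈ s.reverse then 1 else 0)
    (fun j ↦ by split_ifs <;> simp) u
  rw [multiPD_indicator hs', List.reverse_reverse, norm_mul, norm_prod] at hbound
  rw [one_mul, List.map_reverse, List.prod_reverse, prod_map_toList]
  refine hbound.trans' (le_of_eq ?_)
  rw [← List.prod_toFinset _ hnodup, ← Finset.prod_subset (subset_univ s.toFinset)]
  · congr 1
    exact prod_congr rfl fun j hj ↦ by simp_all
  · intro j _ hj
    simp_all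

lemma norm_apply_le (hM : IsMixedMikhlinBounded v A M) (t : ι → ℝ) :
    ‖M t‖ ≤ A * ∏ j, v j (t j) := by
  have := hM.hasMixedBounds t t (fun _ _ ↦ rfl) [] (List.nil_sublist _)
  rw [List.map_reverse, List.prod_reverse, prod_map_toList] at this
  simpa [mixedPartial] using this

lemma norm_foldr_weightedDiff_le {φ : ι → ℝ → ℂ} {δ : ι → ℝ} {w : ι → ℝ → ℝ}
    (hM : IsMixedMikhlinBounded v A M)
    (hw : ∀ j, IsDifferenceMajorant (φ j) (δ j) (v j) (w j)) (t : ι → ℝ) :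
    ‖univ.toList.reverse.foldr (weightedDiff φ δ) M t‖ ≤ A * ∏ j, w j (t j) := by
  have := (hM.hasMixedBounds t).norm_foldr_weightedDiff_le hw
    (List.nodup_reverse.2 (nodup_toList _)) (by simpa using hM.contDiff) zero_le_one
  rwa [one_mul, List.map_reverse, List.prod_reverse, prod_map_toList] at this

end IsMixedMikhlinBounded

end MixedDifferences

section PhaseShift

variable {ι : Type} [Fintype ι]

lemma norm_phase (t x : ι → ℝ) : ‖Complex.exp (-(Complex.I * (dotp t x : ℝ)))‖ = 1 := by
  rw [Complex.norm_exp]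
  simp

lemma integrable_phase_mul (x : ι → ℝ) {F : (ι → ℝ) → ℂ} (hF : Integrable F) :
    Integrable fun t ↦ Complex.exp (-(Complex.I * (dotp t x : ℝ))) * F t := by
  refine hF.bdd_mul (c := 1) (Continuous.aestronglyMeasurable ?_)
    (ae_of_all _ fun t ↦ (norm_phase t x).le)
  unfold dotp
  fun_prop

variable [DecidableEq ι]

lemma integrable_shiftDiff (δ : ι → ℝ) (j : ι) {F : (ι → ℝ) → ℂ} (hF : Integrable F) :
    Integrable (shiftDiff δ j F) := by
  simp only [funext (shiftDiff_apply δ j F)]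
  exact (hF.comp_add_right _).sub hF

lemma integrable_foldr_shiftDiff (δ : ι → ℝ) (r : List ι) {F : (ι → ℝ) → ℂ} (hF : Integrable F) :
    Integrable (r.foldr (shiftDiff δ) F) := by
  induction r with
  | nil => exact hF
  | cons j r ih => exact integrable_shiftDiff δ j ih

lemma phase_add_single {δ x : ι → ℝ} {j : ι} (hδ : δ j * x j = Real.pi) (t : ι → ℝ) :
    Complex.exp (-(Complex.I * (dotp (t + Pi.single j (δ j)) x : ℝ))) =
      -Complex.exp (-(Complex.I * (dotp t x : ℝ))) := by
  have hdotp : dotp (t + Pi.single j (δ j)) x = dotp t x + Real.pi := by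
    simp [dotp, add_mul, sum_add_distrib, Pi.single_apply, hδ]
  rw [hdotp, ← Complex.exp_sub_pi_mul_I]
  congr 1
  push_cast
  ring

lemma integral_phase_mul_shiftDiff {δ x : ι → ℝ} {j : ι} (hδ : δ j * x j = Real.pi)
    {F : (ι → ℝ) → ℂ} (hF : Integrable F) :
    ∫ t, Complex.exp (-(Complex.I * (dotp t x : ℝ))) * shiftDiff δ j F t =
      -2 * ∫ t, Complex.exp (-(Complex.I * (dotp t x : ℝ))) * F t := by
  set G : (ι → ℝ) → ℂ := fun t ↦ Complex.exp (-(Complex.I * (dotp t x : ℝ))) * F t with hG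
  have hint : Integrable G := integrable_phase_mul x hF
  calc ∫ t, Complex.exp (-(Complex.I * (dotp t x : ℝ))) * shiftDiff δ j F t
      = ∫ t, (-G (t + Pi.single j (δ j)) - G t) := by
        congr 1 with t
        simp only [hG, shiftDiff_apply, phase_add_single hδ]
        ring
    _ = -(∫ t, G t) - ∫ t, G t := by
        rw [integral_sub (hint.comp_add_right _).fun_neg hint, integral_neg,
          integral_add_right_eq_self]
    _ = -2 * ∫ t, G t := by ring

lemma integral_phase_mul_foldr_shiftDiff {δ x : ι → ℝ} (r : List ι)
    (hδ : ∀ j ∈ r, δ j * x j = Real.pi) {F : (ι → ℝ) → ℂ} (hF : Integrable F) :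
    ∫ t, Complex.exp (-(Complex.I * (dotp t x : ℝ))) * r.foldr (shiftDiff δ) F t =
      (-2) ^ r.length * ∫ t, Complex.exp (-(Complex.I * (dotp t x : ℝ))) * F t := by
  induction r with
  | nil => simp
  | cons j r ih =>
    rw [List.forall_mem_cons] at hδ
    rw [List.foldr_cons, integral_phase_mul_shiftDiff hδ.1 (integrable_foldr_shiftDiff δ r hF),
      ih hδ.2, List.length_cons, pow_succ']
    ring

lemma foldr_shiftDiff_prod_mul (φ : ι → ℝ → ℂ) (δ : ι → ℝ) (g : (ι → ℝ) → ℂ) {r : List ι}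
    (hr : r.Nodup) :
    r.foldr (shiftDiff δ) (fun t ↦ (∏ k, φ k (t k)) * g t) =
      fun t ↦ (∏ k with k ∉ r, φ k (t k)) * r.foldr (weightedDiff φ δ) g t := by
  induction r with
  | nil => simp
  | cons j r ih =>
    obtain ⟨hj, hr⟩ := List.nodup_cons.1 hr
    have hj_notMem : j ∉ univ.filter (· ∉ j :: r) := by simp
    have hinsert : univ.filter (· ∉ r) = insert j (univ.filter (· ∉ j :: r)) := by
      ext k
      by_cases hk : k = j <;> simp [hk, hj]
    ext t
    have hprod : ∏ k with k ∉ j :: r, φ k (Function.update t j (t j + δ j) k) =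
        ∏ k with k ∉ j :: r, φ k (t k) :=
      prod_congr rfl fun k hk ↦ by rw [Function.update_of_ne (ne_of_mem_of_not_mem hk hj_notMem)]
    rw [List.foldr_cons, ih hr, shiftDiff, hinsert, prod_insert hj_notMem, prod_insert hj_notMem,
      hprod, Function.update_self, List.foldr_cons, weightedDiff_apply]
    ring

lemma integrable_prod_mul_of_isMixedMikhlinBounded {φ : ι → ℝ → ℂ} {v : ι → ℝ → ℝ} {A : ℝ}
    {M : (ι → ℝ) → ℂ} (hM : IsMixedMikhlinBounded v A M) (hφ : ∀ j, Continuous (φ j))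
    (hφv : ∀ j, Integrable fun s ↦ ‖φ j s‖ * v j s) :
    Integrable fun t : ι → ℝ ↦ (∏ j, φ j (t j)) * M t := by
  have hcont : Continuous M := hM.contDiff.continuous
  refine ((Integrable.fintype_prod hφv).const_mul A).mono'
    (Continuous.aestronglyMeasurable (by fun_prop)) (ae_of_all _ fun t ↦ ?_)
  calc ‖(∏ j, φ j (t j)) * M t‖ ≤ (∏ j, ‖φ j (t j)‖) * (A * ∏ j, v j (t j)) := by
        rw [norm_mul, norm_prod]
        gcongr
        exact hM.norm_apply_le t
    _ = A * ∏ j, (‖φ j (t j)‖ * v j (t j)) := by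
        rw [prod_mul_distrib]
        ring

lemma norm_integral_phase_mul_le {φ : ι → ℝ → ℂ} {v w : ι → ℝ → ℝ} {δ x : ι → ℝ} {A : ℝ}
    {M : (ι → ℝ) → ℂ} (hM : IsMixedMikhlinBounded v A M) (hφ : ∀ j, Continuous (φ j))
    (hφv : ∀ j, Integrable fun s ↦ ‖φ j s‖ * v j s) (hδ : ∀ j, δ j * x j = Real.pi)
    (hw : ∀ j, IsDifferenceMajorant (φ j) (δ j) (v j) (w j)) (hw_int : ∀ j, Integrable (w j)) :
    ‖∫ t, Complex.exp (-(Complex.I * (dotp t x : ℝ))) * ((∏ j, φ j (t j)) * M t)‖ ≤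
      A * ∏ j, ∫ s, w j s := by
  set J := ∫ t, Complex.exp (-(Complex.I * (dotp t x : ℝ))) * ((∏ j, φ j (t j)) * M t)
  set r := (univ : Finset ι).toList.reverse with hr
  have hfold : r.foldr (shiftDiff δ) (fun t ↦ (∏ j, φ j (t j)) * M t) =
      r.foldr (weightedDiff φ δ) M := by
    rw [foldr_shiftDiff_prod_mul φ δ M (List.nodup_reverse.2 (nodup_toList _))]
    simp [hr]
  have hshift := integral_phase_mul_foldr_shiftDiff r (fun j _ ↦ hδ j)
    (integrable_prod_mul_of_isMixedMikhlinBounded hM hφ hφv)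
  rw [hfold] at hshift
  calc ‖J‖ ≤ 2 ^ r.length * ‖J‖ :=
        le_mul_of_one_le_left (norm_nonneg _) (one_le_pow₀ one_le_two)
    _ = ‖∫ t, Complex.exp (-(Complex.I * (dotp t x : ℝ))) *
          r.foldr (weightedDiff φ δ) M t‖ := by
        rw [hshift, norm_mul, norm_pow, norm_neg, Complex.norm_ofNat]
    _ ≤ ∫ t : ι → ℝ, A * ∏ j, w j (t j) := by
        refine norm_integral_le_of_norm_le ((Integrable.fintype_prod hw_int).const_mul A)
          (ae_of_all _ fun t ↦ ?_)
        rw [norm_mul, norm_phase, one_mul]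
        exact hM.norm_foldr_weightedDiff_le hw t
    _ = A * ∏ j, ∫ s, w j s := by
        rw [integral_const_mul, integral_fintype_prod_volume_eq_prod]

end PhaseShift

section DeconvolutionKernel

variable {d : ℕ} (I : Finset (Fin d)) (K : SchwartzMap ℝ ℝ)

lemma integral_exp_mul_rescaled {h : ℝ} (hh : 0 < h) (s : ℝ) :
    ∫ x : ℝ, Complex.exp (Complex.I * (s * x : ℝ)) * ((h⁻¹ * K (x / h) : ℝ) : ℂ) =
      schwartzFT K (h * s) := by
  set g : ℝ → ℂ := fun y ↦ Complex.exp (Complex.I * (h * s * y : ℝ)) * (K y : ℂ) with hg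
  have hscale (x : ℝ) : Complex.exp (Complex.I * (s * x : ℝ)) * ((h⁻¹ * K (x / h) : ℝ) : ℂ) =
      h⁻¹ • g (x / h) := by
    have harg : h * s * (x / h) = s * x := by field_simp
    simp only [hg, harg, Complex.real_smul]
    push_cast
    ring
  simp_rw [hscale]
  rw [integral_smul, Measure.integral_comp_div, abs_of_pos hh, smul_smul, inv_mul_cancel₀ hh.ne',
    one_smul, schwartzFT_apply]

lemma ftI_Kh {h : Fin d → ℝ} (hh : ∀ j, 0 < h j) (t : I → ℝ) :
    ftI (Kh I K h) t = ∏ j : I, schwartzFT K (h j * t j) := by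
  simp_rw [← integral_exp_mul_rescaled K (hh _)]
  rw [← integral_fintype_prod_volume_eq_prod (f := fun (j : I) x ↦
    Complex.exp (Complex.I * (t j * x : ℝ)) * (((h j)⁻¹ * K (x / h j) : ℝ) : ℂ)), ftI]
  congr 1 with x
  rw [prod_mul_distrib, ← Complex.exp_sum, Kh, dotp, ← Complex.ofReal_prod, prod_mul_distrib,
    Finset.prod_inv_distrib, prod_coe_sort I h, Complex.ofReal_sum, mul_sum]

variable {I} {q : (Fin d → ℝ) → ℝ} {A : ℝ} {lam : Fin d → ℝ}

lemma N2mid.isMixedMikhlinBounded (hN2 : N2mid I q A lam) :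
    IsMixedMikhlinBounded (fun (j : I) s ↦ (1 + s ^ 2) ^ (lam j / 2)) A
      (fun t ↦ (ftI (marginal I q) t)⁻¹) where
  contDiff := by simpa only [Fintype.card_coe] using hN2.2.1
  norm_le α hα t := hN2.2.2 α
    ((sum_le_card_nsmul univ α 1 fun j _ ↦ hα j).trans_eq (by simp)) t

lemma exists_norm_Lh_le (hA : 0 ≤ A) (hlam : ∀ j ∈ I, 0 ≤ lam j) (hN2 : N2mid I q A lam) {θ : ℝ}
    (hθ₀ : 0 ≤ θ) (hθ₁ : θ < 1) :
    ∃ C, 0 ≤ C ∧ ∀ h : Fin d → ℝ, (∀ j, 0 < h j ∧ h j ≤ 1) → ∀ x : I → ℝ, (∀ j, x j ≠ 0) →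
      ‖Lh I K q h x‖ ≤ C * ∏ j : I, (h j ^ (-lam j) * (h j)⁻¹ * (1 + |x j / h j|) ^ (-θ)) := by
  choose C hC hmajorant using fun j : I ↦
    exists_isDifferenceMajorant_schwartz (schwartzFT K) (hlam j j.2) hθ₀ hθ₁
  refine ⟨(2 * Real.pi) ^ (-(I.card : ℝ)) * (A * ∏ j, C j),
    mul_nonneg (by positivity) (mul_nonneg hA (prod_nonneg fun j _ ↦ hC j)), fun h hh x hx ↦ ?_⟩
  choose w hw_int hw_le hw using fun j : I ↦ hmajorant j (h j) (hh j).1 (hh j).2 (x j) (hx j)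
  have hw_nonneg (j : I) (s : ℝ) : 0 ≤ w j s := (hw j).nonneg (fun s ↦ by positivity) s
  have hphase := norm_integral_phase_mul_le (x := x) hN2.isMixedMikhlinBounded
    (fun j ↦ (schwartzFT K).continuous.comp (continuous_const_mul (h j)))
    (fun j ↦ integrable_schwartz_comp_mul_left_mul_rpow (schwartzFT K) (hh j).1 (hh j).2
      (hlam j j.2))
    (fun j ↦ div_mul_cancel₀ Real.pi (hx j)) hw hw_int
  have hπ : 0 ≤ (2 * Real.pi) ^ (-(I.card : ℝ)) := by positivity
  rw [Lh, norm_mul, Complex.norm_of_nonneg hπ, mul_assoc, mul_assoc, ← prod_mul_distrib]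
  simp_rw [div_eq_mul_inv (ftI _ _), ftI_Kh I K fun j ↦ (hh j).1]
  gcongr
  refine hphase.trans ?_
  gcongr with j
  · exact fun j _ ↦ integral_nonneg (hw_nonneg j)
  · exact hw_le j

end DeconvolutionKernel

section LpNorm

lemma eLpNorm_fintype_prod {ι 𝕜 : Type*} [Fintype ι] [RCLike 𝕜] {X : ι → Type*}
    {mX : ∀ j, MeasurableSpace (X j)} {μ : ∀ j, Measure (X j)} [∀ j, SigmaFinite (μ j)] {p : ℝ≥0∞}
    (hp₀ : p ≠ 0) (hp : p ≠ ⊤) {f : ∀ j, X j → 𝕜} (hf : ∀ j, MemLp (f j) p (μ j)) :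
    eLpNorm (fun x ↦ ∏ j, f j (x j)) p (Measure.pi μ) = ∏ j, eLpNorm (f j) p (μ j) := by
  have hrpow (x : ∀ j, X j) : ‖∏ j, f j (x j)‖ ^ p.toReal = ∏ j, ‖f j (x j)‖ ^ p.toReal := by
    rw [norm_prod, Real.finsetProd_rpow _ _ fun j _ ↦ norm_nonneg _]
  have hint (j : ι) : Integrable (fun y ↦ ‖f j y‖ ^ p.toReal) (μ j) :=
    (hf j).integrable_norm_rpow hp₀ hp
  have hmeas : AEStronglyMeasurable (fun x ↦ ∏ j, f j (x j)) (Measure.pi μ) :=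
    Finset.aestronglyMeasurable_fun_prod _ fun j _ ↦
      (hf j).1.comp_quasiMeasurePreserving (Measure.quasiMeasurePreserving_eval μ j)
  have hprod : MemLp (fun x ↦ ∏ j, f j (x j)) p (Measure.pi μ) := by
    rw [← integrable_norm_rpow_iff hmeas hp₀ hp]
    simpa only [hrpow] using Integrable.fintype_prod_dep hint
  rw [hprod.eLpNorm_eq_integral_rpow_norm hp₀ hp]
  simp_rw [fun j ↦ (hf j).eLpNorm_eq_integral_rpow_norm hp₀ hp, hrpow]
  rw [integral_fintype_prod_eq_prod (fun j y ↦ ‖f j y‖ ^ p.toReal),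
    ← ENNReal.ofReal_prod_of_nonneg fun j _ ↦ by positivity,
    Real.finsetProd_rpow _ _ fun j _ ↦ by positivity]

lemma eLpNorm_comp_div {E : Type*} [NormedAddCommGroup E] (f : ℝ → E) (p : ℝ≥0∞) {h : ℝ}
    (hh : 0 < h) :
    eLpNorm (fun x ↦ f (x / h)) p = ENNReal.ofReal (h ^ (1 / p).toReal) * eLpNorm f p := by
  have hmap : Measure.map (fun x : ℝ ↦ x * h⁻¹) volume = ENNReal.ofReal h • volume := by
    simpa only [inv_inv, abs_of_pos hh] using Real.map_volume_mul_right (inv_ne_zero hh.ne')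
  have hcomp := (measurableEmbedding_mulRight₀ (inv_ne_zero hh.ne')).eLpNorm_map_measure
    (μ := volume) (p := p) (g := f)
  rw [hmap, eLpNorm_smul_measure_of_ne_zero (ENNReal.ofReal_pos.2 hh).ne', smul_eq_mul,
    ENNReal.ofReal_rpow_of_pos hh] at hcomp
  exact hcomp.symm

lemma memLp_one_add_abs_rpow_neg {θ p : ℝ} (hp : 0 < p) (hθp : 1 < θ * p) :
    MemLp (fun x : ℝ ↦ (1 + |x|) ^ (-θ)) (ENNReal.ofReal p) := by
  rw [← integrable_norm_rpow_iff (Measurable.aestronglyMeasurable (by fun_prop))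
    (ENNReal.ofReal_pos.2 hp).ne' ENNReal.ofReal_ne_top, ENNReal.toReal_ofReal hp.le]
  refine (integrable_one_add_norm (E := ℝ) (r := θ * p) (by simpa using hθp)).congr
    (ae_of_all _ fun x ↦ ?_)
  have hbase : 0 ≤ 1 + |x| := by positivity
  simp only [Real.norm_eq_abs]
  rw [abs_of_nonneg (Real.rpow_nonneg hbase _), ← Real.rpow_mul hbase, neg_mul]

lemma eLpNorm_rescaled_decay {θ lam p h : ℝ} (hp : 0 < p) (hh : 0 < h) :
    eLpNorm (fun x : ℝ ↦ h ^ (-lam) * h⁻¹ * (1 + |x / h|) ^ (-θ)) (ENNReal.ofReal p) =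
      ENNReal.ofReal (h ^ (-(1 - 1 / p)) * h ^ (-lam)) *
        eLpNorm (fun x : ℝ ↦ (1 + |x|) ^ (-θ)) (ENNReal.ofReal p) := by
  have hexp : (1 / ENNReal.ofReal p).toReal = 1 / p := by
    rw [one_div, ENNReal.toReal_inv, ENNReal.toReal_ofReal hp.le, one_div]
  have hpow : h ^ (-lam) * h⁻¹ * h ^ (1 / p) = h ^ (-(1 - 1 / p)) * h ^ (-lam) := by
    rw [neg_sub, Real.rpow_sub hh, Real.rpow_one]
    ring
  simp_rw [← smul_eq_mul (h ^ (-lam) * h⁻¹)]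
  rw [← Pi.smul_def, eLpNorm_const_smul, eLpNorm_comp_div (fun x : ℝ ↦ (1 + |x|) ^ (-θ)) _ hh,
    ← mul_assoc, Real.enorm_of_nonneg (by positivity), ← ENNReal.ofReal_mul (by positivity), hexp,
    hpow]

lemma eLpNorm_prod_rescaled_decay {d : ℕ} (I : Finset (Fin d)) {h lam : Fin d → ℝ} {θ p : ℝ}
    (hh : ∀ j, 0 < h j) (hp : 0 < p) (hθp : 1 < θ * p) :
    eLpNorm (fun x : I → ℝ ↦
        ∏ j : I, (h j ^ (-lam j) * (h j)⁻¹ * (1 + |x j / h j|) ^ (-θ))) (ENNReal.ofReal p) =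
      ENNReal.ofReal ((∏ j ∈ I, h j) ^ (-(1 - 1 / p)) * ∏ j ∈ I, h j ^ (-lam j)) *
        eLpNorm (fun x : ℝ ↦ (1 + |x|) ^ (-θ)) (ENNReal.ofReal p) ^ I.card := by
  have hmemLp (j : I) : MemLp (fun x : ℝ ↦ h j ^ (-lam j) * (h j)⁻¹ * (1 + |x / h j|) ^ (-θ))
      (ENNReal.ofReal p) := by
    refine ⟨Measurable.aestronglyMeasurable (by fun_prop), ?_⟩
    rw [eLpNorm_rescaled_decay hp (hh j)]
    exact ENNReal.mul_lt_top ENNReal.ofReal_lt_top (memLp_one_add_abs_rpow_neg hp hθp).2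
  rw [volume_pi,
    eLpNorm_fintype_prod (ENNReal.ofReal_pos.2 hp).ne' ENNReal.ofReal_ne_top hmemLp]
  simp_rw [eLpNorm_rescaled_decay hp (hh _)]
  have hbandwidth_nonneg (j : Fin d) : 0 ≤ h j ^ (-(1 - 1 / p)) * h j ^ (-lam j) :=
    mul_nonneg (Real.rpow_nonneg (hh j).le _) (Real.rpow_nonneg (hh j).le _)
  rw [prod_mul_distrib, prod_const, card_univ, Fintype.card_coe,
    ← ENNReal.ofReal_prod_of_nonneg fun (j : I) _ ↦ hbandwidth_nonneg j,
    prod_coe_sort I fun j ↦ h j ^ (-(1 - 1 / p)) * h j ^ (-lam j), prod_mul_distrib,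
    Real.finsetProd_rpow _ _ fun j _ ↦ (hh j).le]

end LpNorm

theorem statement3_general {d : ℕ} (I : Finset (Fin d)) (K : SchwartzMap ℝ ℝ)
    (q : (Fin d → ℝ) → ℝ) {A : ℝ} (hA : 0 ≤ A) {lam : Fin d → ℝ} (hlam : ∀ j ∈ I, 0 ≤ lam j)
    {p : ℝ} (hp : 1 < p) (hN2 : N2mid I q A lam) :
    ∃ C : ℝ, 0 < C ∧ ∀ h : Fin d → ℝ, (∀ j, 0 < h j ∧ h j ≤ 1) →
      eLpNorm (Lh I K q h) (ENNReal.ofReal p) volume ≤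
        ENNReal.ofReal (C * (∏ j ∈ I, h j) ^ (-(1 - 1 / p)) * ∏ j ∈ I, h j ^ (-lam j)) := by
  have hp₀ : 0 < p := one_pos.trans hp
  obtain ⟨θ, hθp, hθ₁⟩ := exists_between ((div_lt_one hp₀).2 hp)
  obtain ⟨C, hC, hLh⟩ := exists_norm_Lh_le (K := K) hA hlam hN2
    ((one_div_nonneg.2 hp₀.le).trans hθp.le) hθ₁
  rw [div_lt_iff₀ hp₀] at hθp
  set D := ENNReal.ofReal C * eLpNorm (fun x : ℝ ↦ (1 + |x|) ^ (-θ)) (ENNReal.ofReal p) ^ I.card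
  have hD : D ≠ ⊤ := ENNReal.mul_ne_top ENNReal.ofReal_ne_top
    (ENNReal.pow_ne_top (memLp_one_add_abs_rpow_neg hp₀ hθp).2.ne)
  refine ⟨D.toReal + 1, by positivity, fun h hh ↦ ?_⟩
  have hx_ne : ∀ᵐ x : I → ℝ, ∀ j, x j ≠ 0 := ae_all_iff.2 fun j ↦ Measure.ae_eval_ne _ j 0
  have hle := eLpNorm_le_mul_eLpNorm_of_ae_le_mul (p := ENNReal.ofReal p) <| hx_ne.mono fun x hx ↦
    (hLh h hh x hx).trans (mul_le_mul_of_nonneg_left (Real.le_norm_self _) hC)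
  rw [eLpNorm_prod_rescaled_decay I (fun j ↦ (hh j).1) hp₀ hθp, mul_left_comm, mul_comm] at hle
  refine hle.trans ?_
  rw [mul_assoc (D.toReal + 1), ENNReal.ofReal_mul (add_nonneg ENNReal.toReal_nonneg zero_le_one)]
  gcongr
  exact (ENNReal.le_ofReal_iff_toReal_le hD (by positivity)).2 (le_add_of_nonneg_right zero_le_one)

/-- **Proposition 1(i)**: for `p ∈ (1,2)`, under Assumption (N2), there is a constant
`C_{p,I} > 0` such that `‖L_{(h_I)}‖_p ≤ C_{p,I} V_{h_I}^{-(1-1/p)} ∏_{j∈I} h_j^{-λ_j}`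
for every `h ∈ (0,1]^d`. -/
theorem statement3 (d : ℕ) (I : Finset (Fin d)) (hI : I.Nonempty)
    (K : ℝ → ℝ) (hK : IsKernel K) (q : (Fin d → ℝ) → ℝ) (hq : IsDensity q)
    (A : ℝ) (hA : 0 < A) (lam : Fin d → ℝ) (hlam : ∀ j, 0 < lam j)
    (p : ℝ) (hp1 : 1 < p) (hp2 : p < 2)
    (hN2 : N2mid I q A lam) :
    ∃ C : ℝ, 0 < C ∧ ∀ h : Fin d → ℝ, (∀ j, 0 < h j ∧ h j ≤ 1) →
      eLpNorm (Lh I K q h) (ENNReal.ofReal p) volume ≤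
        ENNReal.ofReal (C * (∏ j ∈ I, h j) ^ (-(1 - 1 / p)) * ∏ j ∈ I, h j ^ (-lam j)) := by
  obtain ⟨⟨K, rfl⟩, -, -⟩ := hK
  exact statement3_general I K q hA.le (fun j _ ↦ (hlam j).le) hp1 hN2

end Deconv
end
end

section
/- Let l ≥ 2 be an integer and let u:ℝ→ℝ be a symmetric function in the Schwartz class with ∫_ℝ u(z)dz = 1. Define u_l(z) := Σ_{j=1}^l binom(l,j)(−1)^{j+1}(1/j)·u(z/j). Then ∫_ℝ u_l(z)dz = 1 and ∫_ℝ z^k u_l(z)dz = 0 for every k = 1,…,l−1. -/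
open MeasureTheory Finset
open scoped ENNReal

noncomputable section

/-!
The substitution `z = j w` shows that the `k`-th moment of `u_l` is the `k`-th moment of `u` times
`∑_{j=1}^l C(l,j) (-1)^{j+1} j^k`. Completed by the term `j = 0`, this sum is, up to sign, the
`l`-th forward difference at `0` of the polynomial `x^k`, which vanishes for `k < l`. The missing
term is `-0^k`, so the sum over `1 ≤ j ≤ l` is `1` for `k = 0` and `0` for `1 ≤ k < l`.
-/

lemma sum_range_choose_mul_neg_one_pow_mul_pow_eq_zero (R : Type*) [CommRing R] {k l : ℕ}
    (hkl : k < l) :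
    ∑ j ∈ range (l + 1), (l.choose j : R) * (-1) ^ (j + 1) * (j : R) ^ k = 0 := by
  have fwdDiff_eq_zero : ∑ j ∈ range (l + 1),
      ((-1 : ℤ) ^ (l - j) * (l.choose j : ℤ)) • ((0 : R) + j • (1 : R)) ^ k = 0 := by
    rw [← fwdDiff_iter_eq_sum_shift 1 (fun x : R ↦ x ^ k), fwdDiff_iter_pow_eq_zero_of_lt hkl,
      Pi.zero_apply]
  rw [← mul_zero ((-1) ^ (l + 1)), ← fwdDiff_eq_zero, mul_sum]
  refine sum_congr rfl fun j hj ↦ ?_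
  have sign_eq : (-1 : R) ^ (j + 1) = (-1) ^ (l + 1) * (-1) ^ (l - j) := by
    obtain ⟨m, rfl⟩ := Nat.exists_eq_add_of_le (mem_range_succ_iff.mp hj)
    rw [Nat.add_sub_cancel_left, ← pow_add, show j + m + 1 + m = j + 1 + 2 * m by ring,
      pow_add _ (j + 1), pow_mul, neg_one_sq, one_pow, mul_one]
  rw [sign_eq]
  simp only [zsmul_eq_mul, nsmul_eq_mul, mul_one, zero_add]
  push_cast
  ring

lemma sum_Icc_choose_mul_neg_one_pow_mul_pow (R : Type*) [CommRing R] {k l : ℕ} (hkl : k < l) :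
    ∑ j ∈ Icc 1 l, (l.choose j : R) * (-1) ^ (j + 1) * (j : R) ^ k = 0 ^ k := by
  have range_sum := sum_range_choose_mul_neg_one_pow_mul_pow_eq_zero R hkl
  rw [Nat.range_succ_eq_Icc_zero, ← add_sum_Ioc_eq_sum_Icc l.zero_le,
    ← Icc_add_one_left_eq_Ioc] at range_sum
  simp only [Nat.choose_zero_right, Nat.cast_one, Nat.cast_zero, zero_add, pow_one,
    one_mul] at range_sum
  linear_combination range_sum

lemma pow_smul_comp_div {K M : Type*} [Field K] [MulAction K M] {c : K} (hc : c ≠ 0) (u : K → M)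
    (k : ℕ) (z : K) : z ^ k • u (z / c) = c ^ k • ((z / c) ^ k • u (z / c)) := by
  rw [smul_smul, ← mul_pow, mul_div_cancel₀ z hc]

section Moments

variable {E : Type*} [NormedAddCommGroup E] [NormedSpace ℝ E] {u : ℝ → E} {k : ℕ}

lemma integrable_pow_smul_schwartzMap (μ : Measure ℝ) [μ.HasTemperateGrowth]
    (f : SchwartzMap ℝ E) (k : ℕ) : Integrable (fun z : ℝ ↦ z ^ k • f z) μ := by
  have aestronglyMeasurable : AEStronglyMeasurable (fun z : ℝ ↦ z ^ k • f z) μ :=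
    ((continuous_id.pow k).smul f.continuous).aestronglyMeasurable
  rw [← integrable_norm_iff aestronglyMeasurable]
  simpa only [norm_smul, norm_pow] using f.integrable_pow_mul μ k

lemma integrable_pow_smul_comp_div {c : ℝ} (hc : c ≠ 0)
    (hu : Integrable fun z : ℝ ↦ z ^ k • u z) :
    Integrable fun z : ℝ ↦ z ^ k • u (z / c) := by
  simp_rw [pow_smul_comp_div hc]
  exact (hu.comp_div hc).smul (c ^ k)

lemma integral_pow_smul_comp_div {c : ℝ} (hc : c ≠ 0) (u : ℝ → E) (k : ℕ) :
    ∫ z : ℝ, z ^ k • u (z / c) = (c ^ k * |c|) • ∫ z : ℝ, z ^ k • u z := by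
  simp_rw [pow_smul_comp_div hc]
  rw [integral_smul, Measure.integral_comp_div (fun z : ℝ ↦ z ^ k • u z), smul_smul]

/-- The kernel `u_l` of the paper, an alternating binomial combination of the dilates
`z ↦ j⁻¹ u(z / j)` of `u`, for a function `u` with values in a real normed space. -/
def binomialKernel (l : ℕ) (u : ℝ → E) (z : ℝ) : E :=
  ∑ j ∈ Icc 1 l, ((l.choose j : ℝ) * (-1) ^ (j + 1) * (j : ℝ)⁻¹) • u (z / j)

lemma integral_pow_smul_binomialKernel (l : ℕ) (hu : Integrable fun z : ℝ ↦ z ^ k • u z) :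
    ∫ z, z ^ k • binomialKernel l u z =
      (∑ j ∈ Icc 1 l, (l.choose j : ℝ) * (-1) ^ (j + 1) * (j : ℝ) ^ k) • ∫ z, z ^ k • u z := by
  have cast_pos {j : ℕ} (hj : j ∈ Icc 1 l) : (0 : ℝ) < j := Nat.cast_pos.mpr (mem_Icc.mp hj).1
  simp_rw [binomialKernel, smul_sum, smul_comm (_ ^ k : ℝ)]
  rw [integral_finsetSum _ fun j hj ↦
    (integrable_pow_smul_comp_div (cast_pos hj).ne' hu).fun_smul _, sum_smul]
  refine sum_congr rfl fun j hj ↦ ?_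
  have hj_pos := cast_pos hj
  rw [integral_smul, integral_pow_smul_comp_div hj_pos.ne', smul_smul, abs_of_pos hj_pos]
  congr 1
  field_simp

theorem integral_pow_smul_binomialKernel_of_lt {l : ℕ} (hkl : k < l)
    (hu : Integrable fun z : ℝ ↦ z ^ k • u z) :
    ∫ z, z ^ k • binomialKernel l u z = (0 : ℝ) ^ k • ∫ z, z ^ k • u z := by
  rw [integral_pow_smul_binomialKernel l hu, sum_Icc_choose_mul_neg_one_pow_mul_pow ℝ hkl]

theorem statement13_general {l : ℕ} (hl : 0 < l)
    (hu : ∀ k < l, Integrable fun z : ℝ ↦ z ^ k • u z) :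
    ∫ z, binomialKernel l u z = ∫ z, u z ∧
      ∀ k, 1 ≤ k → k < l → ∫ z, z ^ k • binomialKernel l u z = 0 := by
  constructor
  · simpa using integral_pow_smul_binomialKernel_of_lt hl (hu 0 hl)
  · intro k hk hkl
    rw [integral_pow_smul_binomialKernel_of_lt hkl (hu k hkl),
      zero_pow (Nat.one_le_iff_ne_zero.mp hk), zero_smul]

end Moments

/-- **Vanishing-moments property of the kernel `u_l`** (eq. (12) of the paper):
if `l ≥ 2` and `u : ℝ → ℝ` is a symmetric Schwartz function with `∫ u = 1`, then
`u_l(z) := ∑_{j=1}^l C(l,j) (-1)^{j+1} (1/j) u(z/j)` satisfies `∫ u_l = 1` and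
`∫ z^k u_l(z) dz = 0` for every `k = 1,…,l-1`. -/
theorem statement13 (l : ℕ) (hl : 2 ≤ l) (u : ℝ → ℝ)
    (hSchwartz : ∃ uS : SchwartzMap ℝ ℝ, ⇑uS = u)
    (hsymm : ∀ z, u (-z) = u z) (hint : (∫ z, u z) = 1)
    (ul : ℝ → ℝ)
    (hul : ul = fun z => ∑ j ∈ Finset.Icc 1 l,
      (l.choose j : ℝ) * (-1 : ℝ) ^ (j + 1) * (j : ℝ)⁻¹ * u (z / j)) :
    (∫ z, ul z) = 1 ∧ ∀ k : ℕ, 1 ≤ k → k ≤ l - 1 → (∫ z, z ^ k * ul z) = 0 := by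
  obtain ⟨uS, rfl⟩ := hSchwartz
  obtain ⟨integral_eq, moments_eq_zero⟩ := statement13_general (l := l) (by lia)
    fun k _ ↦ integrable_pow_smul_schwartzMap volume uS k
  exact hul ▸ ⟨integral_eq.trans hint, fun k hk hkl ↦ moments_eq_zero k hk (by lia)⟩
end
end
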